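/- arXiv:1606.06878 — 2 statements merged into one kernel-verified Lean document; each statement's English description precedes it below -/
import Mathlib

section
/- Let d ≥ 1, let ω ∈ ℝ^d be nonresonant, and let h : ℝ × ℝ^d → ℝ be real analytic and 2π-periodic in each of the last d coordinates. Let h₀(x) = (2π)^{−d} ∫_{[0,2π]^d} h(x,ψ) dψ, and assume c₀ ∈ ℝ is a simple zero of h₀ (i.e. h₀(c₀) = 0 and h₀'(c₀) ≠ 0). Then there exists ε₀ > 0 such that for every ε with 0 < |ε| < ε₀ there is a function X_ε : ℝ^d → ℝ, real analytic and 2π-periodic in each coordinate, such that the function x(t) = c₀ + X_ε(ωt) satisfies ε x''(t) + x'(t) + ε h(x(t), ωt) = 0 for all t ∈ ℝ; moreover sup_{ψ∈ℝ^d} |X_ε(ψ)| → 0 as ε → 0. -/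
open MeasureTheory Filter

/-!
Move the zero of the average to the origin and let `a ≠ 0` be its slope there. For small `ε` the
operator `ε y'' + y' + ε a y` factors along two nonzero real roots, so `ε y'' + y' + ε a y = ε f`
has a Green operator `y = G_ε f` on bounded functions, of norm at most `1 / |a|`, and `G_ε` is
`O(ε)` on derivatives. By nonresonance every nonconstant Fourier mode is a derivative along the flow
`ψ + t • ω`, so a continuous function of mean zero on the torus is a uniform limit of such
derivatives, without any control of small divisors. Hence `G_ε` is small on mean-zero
quasi-periodic forcings.

The equation on the orbit through `θ` becomes `u + G_ε (h(u, θ + t • ω) - a u) = 0`. The residual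
at `u = 0` is small, and the linearization is close to `1 + T`, with `T v = G_ε (b v)` and `b` of
mean zero; `T` need not be small, but `T²` is, by integration by parts. Newton iteration gives a
unique small solution `S θ`, analytic in `θ` by the implicit function theorem. Uniqueness forces
`S` to be periodic and `S (θ + s • ω)` to be the translate of `S θ` by `s`, so `X_ε θ = S θ 0` is
the hull of a solution.
-/

noncomputable section

open Metric Set
open scoped BoundedContinuousFunction Topology

section TimeTranslate

variable {F : Type*} [PseudoMetricSpace F]

/-- The time translate `t ↦ f (t + s)` of a bounded continuous function. -/
def timeTranslate (s : ℝ) (f : ℝ →ᵇ F) : ℝ →ᵇ F :=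
  f.compContinuous ⟨(· + s), continuous_add_const s⟩

@[simp]
theorem timeTranslate_apply (s : ℝ) (f : ℝ →ᵇ F) (t : ℝ) : timeTranslate s f t = f (t + s) :=
  rfl

end TimeTranslate

section Resolvent

variable {E : Type*} [NormedAddCommGroup E] [NormedSpace ℝ E]

theorem hasDerivAt_exp_smul {y : ℝ → E} {y' : E} {t : ℝ} (c : ℝ) (hy : HasDerivAt y y' t) :
    HasDerivAt (fun s ↦ Real.exp (c * s) • y s) (Real.exp (c * t) • (c • y t + y')) t := by
  have hexp : HasDerivAt (fun s ↦ Real.exp (c * s)) (Real.exp (c * t) * (c * 1)) t :=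
    ((hasDerivAt_id t).const_mul c).exp
  refine (hexp.smul hy).congr_deriv ?_
  module

theorem eq_zero_of_hasDerivAt_smul_self {l : ℝ} (hl : l ≠ 0) {y : ℝ →ᵇ E}
    (hy : ∀ t, HasDerivAt y (l • y t) t) : y = 0 := by
  set q : ℝ → E := fun t ↦ Real.exp (-l * t) • y t with hq
  have hq' (t : ℝ) : HasDerivAt q 0 t :=
    (hasDerivAt_exp_smul (-l) (hy t)).congr_deriv (by module)
  have hconst (s t : ℝ) : q s = q t :=
    is_const_of_deriv_eq_zero (fun t ↦ (hq' t).differentiableAt) (fun t ↦ (hq' t).deriv) s t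
  have hdecay : Tendsto (fun x : ℝ ↦ Real.exp (-x) * ‖y‖) atTop (𝓝 0) := by
    simpa using Real.tendsto_exp_neg_atTop_nhds_zero.mul_const ‖y‖
  ext t
  have hbound (x : ℝ) : ‖q t‖ ≤ Real.exp (-x) * ‖y‖ := by
    rw [hconst t (x / l), hq, norm_smul, Real.norm_eq_abs, Real.abs_exp,
      show -l * (x / l) = -x by field_simp]
    gcongr
    exact y.norm_coe_le_norm _
  have hqt : q t = 0 := norm_le_zero_iff.1 (ge_of_tendsto' hdecay hbound)
  simpa [hq] using hqt

theorem eq_of_hasDerivAt_smul_self_add {l : ℝ} (hl : l ≠ 0) {f y z : ℝ →ᵇ E}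
    (hy : ∀ t, HasDerivAt y (l • y t + f t) t) (hz : ∀ t, HasDerivAt z (l • z t + f t) t) :
    y = z := by
  rw [← sub_eq_zero]
  refine eq_zero_of_hasDerivAt_smul_self hl fun t ↦ ((hy t).sub (hz t)).congr_deriv ?_
  rw [BoundedContinuousFunction.sub_apply]
  module

variable [CompleteSpace E]

theorem hasDerivAt_integral_Iic {G : ℝ → E} (hG : Continuous G)
    (hint : ∀ t, IntegrableOn G (Iic t)) (t : ℝ) :
    HasDerivAt (fun t ↦ ∫ s in Iic t, G s) (G t) t := by
  have hsplit : (fun t ↦ ∫ s in Iic t, G s) =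
      fun t ↦ (∫ s in (0 : ℝ)..t, G s) + ∫ s in Iic 0, G s := by
    funext t
    rw [← intervalIntegral.integral_Iic_sub_Iic (hint 0) (hint t), sub_add_cancel]
  rw [hsplit]
  exact (intervalIntegral.integral_hasDerivAt_right (hG.intervalIntegrable _ _)
    (hG.stronglyMeasurableAtFilter _ _) hG.continuousAt).add_const _

theorem exists_hasDerivAt_smul_self_add_of_neg {l : ℝ} (hl : l < 0) (f : ℝ →ᵇ E) :
    ∃ y : ℝ →ᵇ E, (∀ t, HasDerivAt y (l • y t + f t) t) ∧ ‖y‖ ≤ ‖f‖ / |l| := by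
  have hl' : 0 < -l := neg_pos.2 hl
  let G : ℝ → E := fun s ↦ Real.exp (-l * s) • f s
  have hGc : Continuous G := by fun_prop
  have hexp (t : ℝ) : IntegrableOn (fun s ↦ ‖f‖ * Real.exp (-l * s)) (Iic t) :=
    (integrableOn_exp_mul_Iic hl' t).const_mul ‖f‖
  have hG (s : ℝ) : ‖G s‖ ≤ ‖f‖ * Real.exp (-l * s) := by
    rw [norm_smul, Real.norm_eq_abs, Real.abs_exp, mul_comm]
    gcongr
    exact f.norm_coe_le_norm s
  have hint (t : ℝ) : IntegrableOn G (Iic t) :=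
    (hexp t).mono' hGc.aestronglyMeasurable (.of_forall hG)
  have hexp_cancel (t : ℝ) : Real.exp (l * t) * Real.exp (-l * t) = 1 := by
    rw [← Real.exp_add, neg_mul, add_neg_cancel, Real.exp_zero]
  let y : ℝ → E := fun t ↦ Real.exp (l * t) • ∫ s in Iic t, G s
  have hy (t : ℝ) : HasDerivAt y (l • y t + f t) t := by
    refine (hasDerivAt_exp_smul l (hasDerivAt_integral_Iic hGc hint t)).congr_deriv ?_
    rw [smul_add, smul_comm, smul_smul (Real.exp (l * t)), hexp_cancel, one_smul]
  have hybound (t : ℝ) : ‖y t‖ ≤ ‖f‖ / |l| :=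
    calc ‖y t‖ = Real.exp (l * t) * ‖∫ s in Iic t, G s‖ := by
          rw [norm_smul, Real.norm_eq_abs, Real.abs_exp]
      _ ≤ Real.exp (l * t) * ∫ s in Iic t, ‖f‖ * Real.exp (-l * s) := by
          gcongr
          exact norm_integral_le_of_norm_le (hexp t) (.of_forall hG)
      _ = Real.exp (l * t) * Real.exp (-l * t) * (‖f‖ / -l) := by
          rw [integral_const_mul, integral_exp_mul_Iic hl' t]
          ring
      _ = ‖f‖ / |l| := by rw [hexp_cancel, one_mul, abs_of_neg hl]
  exact ⟨.ofNormedAddCommGroup y (continuous_iff_continuousAt.2 fun t ↦ (hy t).continuousAt)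
    _ hybound, hy, BoundedContinuousFunction.norm_ofNormedAddCommGroup_le _ (by positivity) hybound⟩

theorem exists_hasDerivAt_smul_self_add {l : ℝ} (hl : l ≠ 0) (f : ℝ →ᵇ E) :
    ∃ y : ℝ →ᵇ E, (∀ t, HasDerivAt y (l • y t + f t) t) ∧ ‖y‖ ≤ ‖f‖ / |l| := by
  rcases lt_or_gt_of_ne hl with hneg | hpos
  · exact exists_hasDerivAt_smul_self_add_of_neg hneg f
  · let rev : C(ℝ, ℝ) := ⟨Neg.neg, continuous_neg⟩
    obtain ⟨z, hz, hzf⟩ :=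
      exists_hasDerivAt_smul_self_add_of_neg (neg_lt_zero.2 hpos) (f.compContinuous rev)
    refine ⟨-z.compContinuous rev, fun t ↦ ?_, ?_⟩
    · refine ((hz (-t)).scomp t (hasDerivAt_neg t)).neg.congr_deriv ?_
      simp [rev, add_comm]
    · have hz_rev : ‖z.compContinuous rev‖ ≤ ‖z‖ :=
        BoundedContinuousFunction.norm_compContinuous_le z rev
      have hf_rev : ‖f.compContinuous rev‖ ≤ ‖f‖ :=
        BoundedContinuousFunction.norm_compContinuous_le f rev
      rw [norm_neg]
      rw [abs_neg] at hzf
      exact hz_rev.trans (hzf.trans (by gcongr))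

theorem exists_resolvent {l : ℝ} (hl : l ≠ 0) :
    ∃ R : (ℝ →ᵇ E) →L[ℝ] (ℝ →ᵇ E),
      ∀ f, (∀ t, HasDerivAt (R f) (l • R f t + f t) t) ∧ ‖R f‖ ≤ ‖f‖ / |l| := by
  choose R hR hRf using exists_hasDerivAt_smul_self_add (E := E) hl
  have hadd (f g : ℝ →ᵇ E) : R (f + g) = R f + R g :=
    eq_of_hasDerivAt_smul_self_add hl (hR _) fun t ↦
      ((hR f t).add (hR g t)).congr_deriv <| by
        simp only [BoundedContinuousFunction.add_apply]
        module
  have hsmul (c : ℝ) (f : ℝ →ᵇ E) : R (c • f) = c • R f :=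
    eq_of_hasDerivAt_smul_self_add hl (hR _) fun t ↦
      ((hR f t).const_smul c).congr_deriv <| by
        simp only [BoundedContinuousFunction.smul_apply]
        module
  exact ⟨LinearMap.mkContinuous ⟨⟨R, hadd⟩, hsmul⟩ |l|⁻¹ fun f ↦
    (hRf f).trans_eq (div_eq_inv_mul _ _), fun f ↦ ⟨hR f, hRf f⟩⟩

/-- The resolvent `(d/dt - l)⁻¹` on bounded continuous functions of time: `boundedResolvent l f` is
the unique bounded solution of `y' = l • y + f`. It is given the junk value `0` at `l = 0`, where
bounded solutions need neither exist nor be unique. -/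
def boundedResolvent (l : ℝ) : (ℝ →ᵇ E) →L[ℝ] (ℝ →ᵇ E) :=
  open Classical in if hl : l ≠ 0 then (exists_resolvent hl).choose else 0

variable {l : ℝ}

theorem hasDerivAt_boundedResolvent (hl : l ≠ 0) (f : ℝ →ᵇ E) (t : ℝ) :
    HasDerivAt (boundedResolvent l f) (l • boundedResolvent l f t + f t) t := by
  rw [boundedResolvent, dif_pos hl]
  exact ((exists_resolvent hl).choose_spec f).1 t

theorem norm_boundedResolvent_le (hl : l ≠ 0) (f : ℝ →ᵇ E) :
    ‖boundedResolvent l f‖ ≤ ‖f‖ / |l| := by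
  rw [boundedResolvent, dif_pos hl]
  exact ((exists_resolvent hl).choose_spec f).2

theorem boundedResolvent_eq (hl : l ≠ 0) {f y : ℝ →ᵇ E}
    (hy : ∀ t, HasDerivAt y (l • y t + f t) t) : boundedResolvent l f = y :=
  eq_of_hasDerivAt_smul_self_add hl (hasDerivAt_boundedResolvent hl f) hy

theorem norm_smul_boundedResolvent_add_le (hl : l ≠ 0) (f : ℝ →ᵇ E) :
    ‖l • boundedResolvent l f + f‖ ≤ 2 * ‖f‖ :=
  calc ‖l • boundedResolvent l f + f‖
      ≤ ‖l‖ * ‖boundedResolvent l f‖ + ‖f‖ := (norm_add_le _ _).trans_eq (by rw [norm_smul])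
    _ ≤ |l| * (‖f‖ / |l|) + ‖f‖ := by
        gcongr
        · exact le_rfl
        · exact norm_boundedResolvent_le hl f
    _ = 2 * ‖f‖ := by
        rw [mul_div_cancel₀ _ (abs_ne_zero.2 hl)]
        ring

theorem boundedResolvent_of_hasDerivAt (hl : l ≠ 0) {P p : ℝ →ᵇ E}
    (hP : ∀ t, HasDerivAt P (p t) t) :
    boundedResolvent l p = l • boundedResolvent l P + P :=
  boundedResolvent_eq hl fun t ↦ ((hasDerivAt_boundedResolvent hl P t).const_smul l).add (hP t)

theorem boundedResolvent_comm {m : ℝ} (hl : l ≠ 0) (hm : m ≠ 0) (f : ℝ →ᵇ E) :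
    boundedResolvent l (boundedResolvent m f) =
      boundedResolvent m (boundedResolvent l f) := by
  have hswap : boundedResolvent m (l • boundedResolvent l f + f) =
      m • boundedResolvent m (boundedResolvent l f) + boundedResolvent l f :=
    boundedResolvent_of_hasDerivAt hm (hasDerivAt_boundedResolvent hl f)
  refine boundedResolvent_eq hl fun t ↦ ?_
  refine (hasDerivAt_boundedResolvent hm (boundedResolvent l f) t).congr_deriv ?_
  rw [map_add, map_smul] at hswap
  exact (DFunLike.congr_fun hswap t).symm

theorem boundedResolvent_timeTranslate (hl : l ≠ 0) (s : ℝ) (f : ℝ →ᵇ E) :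
    boundedResolvent l (timeTranslate s f) = timeTranslate s (boundedResolvent l f) :=
  boundedResolvent_eq hl fun t ↦ (hasDerivAt_boundedResolvent hl f (t + s)).comp_add_const t s

end Resolvent

section Green

/-- The characteristic polynomial `ε l² + l + ε a` of `ε y'' + y' + ε a y = 0` is quadratic with
two nonzero real roots. -/
structure IsHyperbolic (a ε : ℝ) : Prop where
  coeff_ne_zero : a ≠ 0
  eps_ne_zero : ε ≠ 0
  discrim_nonneg : 0 ≤ 1 - 4 * ε ^ 2 * a

/-- The root of `ε l² + l + ε a` that stays bounded as `ε → 0`. -/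
def slowRate (a ε : ℝ) : ℝ := (-1 + √(1 - 4 * ε ^ 2 * a)) / (2 * ε)

/-- The root of `ε l² + l + ε a` that is asymptotic to `-1 / ε` as `ε → 0`. -/
def fastRate (a ε : ℝ) : ℝ := (-1 - √(1 - 4 * ε ^ 2 * a)) / (2 * ε)

theorem eventually_isHyperbolic {a : ℝ} (ha : a ≠ 0) : ∀ᶠ ε in 𝓝[≠] 0, IsHyperbolic a ε := by
  have hlim : Tendsto (fun ε : ℝ ↦ 1 - 4 * ε ^ 2 * a) (𝓝[≠] 0) (𝓝 1) :=
    (Continuous.tendsto' (by fun_prop) 0 1 (by simp)).mono_left nhdsWithin_le_nhds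
  filter_upwards [hlim.eventually_const_le one_pos, self_mem_nhdsWithin] with ε hdisc hε
  exact ⟨ha, hε, hdisc⟩

namespace IsHyperbolic

variable {a ε : ℝ}

theorem slowRate_mul_fastRate (h : IsHyperbolic a ε) : slowRate a ε * fastRate a ε = a := by
  have hsq := Real.mul_self_sqrt h.discrim_nonneg
  have hε := h.eps_ne_zero
  rw [slowRate, fastRate]
  field_simp
  linear_combination -hsq

theorem slowRate_add_fastRate (h : IsHyperbolic a ε) : slowRate a ε + fastRate a ε = -ε⁻¹ := by
  have hε := h.eps_ne_zero
  rw [slowRate, fastRate]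
  field_simp
  ring

theorem slowRate_ne_zero (h : IsHyperbolic a ε) : slowRate a ε ≠ 0 :=
  left_ne_zero_of_mul (h.slowRate_mul_fastRate ▸ h.coeff_ne_zero)

theorem fastRate_ne_zero (h : IsHyperbolic a ε) : fastRate a ε ≠ 0 :=
  right_ne_zero_of_mul (h.slowRate_mul_fastRate ▸ h.coeff_ne_zero)

theorem inv_abs_fastRate_le (h : IsHyperbolic a ε) : |fastRate a ε|⁻¹ ≤ 2 * |ε| := by
  have hε : 0 < |ε| := abs_pos.2 h.eps_ne_zero
  have hsqrt := Real.sqrt_nonneg (1 - 4 * ε ^ 2 * a)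
  rw [fastRate, abs_div, inv_div, abs_mul, abs_two,
    abs_of_neg (a := -1 - _) (by linarith)]
  exact div_le_self (by positivity) (by linarith)

end IsHyperbolic

variable {E : Type*} [NormedAddCommGroup E] [NormedSpace ℝ E] [CompleteSpace E]

/-- The Green operator of `ε y'' + y' + ε a y = ε f` on bounded functions, obtained by factoring
`d²/dt² + ε⁻¹ d/dt + a` along the two characteristic roots. -/
def greenOperator (a ε : ℝ) : (ℝ →ᵇ E) →L[ℝ] (ℝ →ᵇ E) :=
  boundedResolvent (slowRate a ε) ∘L boundedResolvent (fastRate a ε)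

/-- The time derivative of `greenOperator a ε f`. -/
def greenVelocity (a ε : ℝ) (f : ℝ →ᵇ E) : ℝ →ᵇ E :=
  slowRate a ε • greenOperator a ε f + boundedResolvent (fastRate a ε) f

namespace IsHyperbolic

variable {a ε : ℝ}

theorem hasDerivAt_greenOperator (h : IsHyperbolic a ε) (f : ℝ →ᵇ E) (t : ℝ) :
    HasDerivAt (greenOperator a ε f) (greenVelocity a ε f t) t :=
  hasDerivAt_boundedResolvent h.slowRate_ne_zero _ t

theorem hasDerivAt_greenVelocity (h : IsHyperbolic a ε) (f : ℝ →ᵇ E) (t : ℝ) :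
    HasDerivAt (greenVelocity a ε f)
      (f t - ε⁻¹ • greenVelocity a ε f t - a • greenOperator a ε f t) t := by
  have hprod : a • greenOperator a ε f t =
      (slowRate a ε * fastRate a ε) • greenOperator a ε f t := by rw [h.slowRate_mul_fastRate]
  refine (((h.hasDerivAt_greenOperator f t).const_smul (slowRate a ε)).add
    (hasDerivAt_boundedResolvent h.fastRate_ne_zero f t)).congr_deriv ?_
  rw [hprod, ← neg_neg ε⁻¹, ← h.slowRate_add_fastRate, greenVelocity]
  simp only [BoundedContinuousFunction.add_apply, BoundedContinuousFunction.smul_apply]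
  module

theorem norm_greenOperator_le (h : IsHyperbolic a ε) (f : ℝ →ᵇ E) :
    ‖greenOperator a ε f‖ ≤ ‖f‖ / |a| :=
  calc ‖greenOperator a ε f‖ ≤ ‖boundedResolvent (fastRate a ε) f‖ / |slowRate a ε| :=
        norm_boundedResolvent_le h.slowRate_ne_zero _
    _ ≤ ‖f‖ / |fastRate a ε| / |slowRate a ε| := by
        gcongr
        exact norm_boundedResolvent_le h.fastRate_ne_zero f
    _ = ‖f‖ / |a| := by rw [div_div, ← abs_mul, mul_comm, h.slowRate_mul_fastRate]

theorem norm_boundedResolvent_fastRate_le (h : IsHyperbolic a ε) (f : ℝ →ᵇ E) :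
    ‖boundedResolvent (fastRate a ε) f‖ ≤ 2 * |ε| * ‖f‖ := by
  refine (norm_boundedResolvent_le h.fastRate_ne_zero f).trans ?_
  rw [div_eq_inv_mul]
  gcongr
  exact h.inv_abs_fastRate_le

theorem norm_greenVelocity_le (h : IsHyperbolic a ε) (f : ℝ →ᵇ E) :
    ‖greenVelocity a ε f‖ ≤ 4 * |ε| * ‖f‖ := by
  have hslow : ‖greenVelocity a ε f‖ ≤ 2 * ‖boundedResolvent (fastRate a ε) f‖ :=
    norm_smul_boundedResolvent_add_le h.slowRate_ne_zero _
  linarith [h.norm_boundedResolvent_fastRate_le f]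

theorem norm_greenOperator_le_of_hasDerivAt (h : IsHyperbolic a ε) {P p : ℝ →ᵇ E}
    (hP : ∀ t, HasDerivAt P (p t) t) : ‖greenOperator a ε p‖ ≤ 4 * |ε| * ‖P‖ :=
  calc ‖greenOperator a ε p‖
      = ‖boundedResolvent (fastRate a ε)
          (slowRate a ε • boundedResolvent (slowRate a ε) P + P)‖ := by
        rw [← boundedResolvent_of_hasDerivAt h.slowRate_ne_zero hP,
          boundedResolvent_comm h.fastRate_ne_zero h.slowRate_ne_zero]
        rfl
    _ ≤ 2 * |ε| * (2 * ‖P‖) :=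
        (h.norm_boundedResolvent_fastRate_le _).trans
          (by gcongr; exact norm_smul_boundedResolvent_add_le h.slowRate_ne_zero P)
    _ = 4 * |ε| * ‖P‖ := by ring

theorem greenOperator_timeTranslate (h : IsHyperbolic a ε) (s : ℝ) (f : ℝ →ᵇ E) :
    greenOperator a ε (timeTranslate s f) = timeTranslate s (greenOperator a ε f) := by
  simp only [greenOperator, ContinuousLinearMap.comp_apply,
    boundedResolvent_timeTranslate h.fastRate_ne_zero,
    boundedResolvent_timeTranslate h.slowRate_ne_zero]

theorem norm_greenOperator_le_of_norm_sub_le (h : IsHyperbolic a ε) {f P p : ℝ →ᵇ E} {δ : ℝ}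
    (hP : ∀ t, HasDerivAt P (p t) t) (hδ : ‖f - p‖ ≤ δ) :
    ‖greenOperator a ε f‖ ≤ 4 * |ε| * ‖P‖ + δ / |a| :=
  calc ‖greenOperator a ε f‖ = ‖greenOperator a ε p + greenOperator a ε (f - p)‖ := by
        rw [← map_add, add_sub_cancel]
    _ ≤ 4 * |ε| * ‖P‖ + δ / |a| :=
        norm_add_le_of_le (h.norm_greenOperator_le_of_hasDerivAt hP)
          ((h.norm_greenOperator_le _).trans (by gcongr))

variable {𝔸 : Type*} [NormedRing 𝔸] [NormedAlgebra ℝ 𝔸] [CompleteSpace 𝔸]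

/-- Integration by parts: `p * G v = (P * G v)' - P * (G v)'`, and both `G ∘ d/dt` and `d/dt ∘ G`
are `O(ε)`. -/
theorem norm_greenOperator_mul_greenOperator_le (h : IsHyperbolic a ε) {b P p : ℝ →ᵇ 𝔸} {δ : ℝ}
    (hP : ∀ t, HasDerivAt P (p t) t) (hδ : ‖b - p‖ ≤ δ) (v : ℝ →ᵇ 𝔸) :
    ‖greenOperator a ε (b * greenOperator a ε v)‖ ≤
      (8 * |ε| * ‖P‖ + δ / |a|) / |a| * ‖v‖ := by
  set G : (ℝ →ᵇ 𝔸) →L[ℝ] (ℝ →ᵇ 𝔸) := greenOperator a ε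
  set V : ℝ →ᵇ 𝔸 := greenVelocity a ε v
  have hGv : ‖G v‖ ≤ ‖v‖ / |a| := h.norm_greenOperator_le v
  have hδ0 : 0 ≤ δ := (norm_nonneg _).trans hδ
  have hsplit : b * G v = (p * G v + P * V) - P * V + (b - p) * G v := by noncomm_ring
  have hprimitive : ‖G (p * G v + P * V)‖ ≤ 4 * |ε| * (‖P‖ * (‖v‖ / |a|)) :=
    (h.norm_greenOperator_le_of_hasDerivAt fun t ↦
      (hP t).mul (h.hasDerivAt_greenOperator v t)).trans
      (by gcongr; exact (norm_mul_le _ _).trans (by gcongr))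
  have hvelocity : ‖G (P * V)‖ ≤ ‖P‖ * (4 * |ε| * ‖v‖) / |a| :=
    (h.norm_greenOperator_le _).trans
      (by gcongr; exact (norm_mul_le _ _).trans (by gcongr; exact h.norm_greenVelocity_le v))
  have hremainder : ‖G ((b - p) * G v)‖ ≤ δ * (‖v‖ / |a|) / |a| :=
    (h.norm_greenOperator_le _).trans
      (by gcongr; exact (norm_mul_le _ _).trans (by gcongr))
  calc ‖G (b * G v)‖
      ≤ 4 * |ε| * (‖P‖ * (‖v‖ / |a|)) + ‖P‖ * (4 * |ε| * ‖v‖) / |a| + δ * (‖v‖ / |a|) / |a| := by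
        rw [hsplit, map_add, map_sub]
        exact norm_add_le_of_le (norm_sub_le_of_le hprimitive hvelocity) hremainder
    _ = (8 * |ε| * ‖P‖ + δ / |a|) / |a| * ‖v‖ := by ring

end IsHyperbolic
end Green

section Coboundary

theorem norm_compContinuous_sub_le {X Y E : Type*} [TopologicalSpace X] [TopologicalSpace Y]
    [SeminormedAddCommGroup E] {G q : X →ᵇ E} {δ : ℝ} (hδ : ‖G - q‖ ≤ δ) (φ : C(Y, X)) :
    ‖G.compContinuous φ - q.compContinuous φ‖ ≤ δ :=
  (BoundedContinuousFunction.norm_compContinuous_le (G - q) φ).trans hδ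

theorem eventually_mul_abs_mul_le {c M η : ℝ} (hη : 0 < η) :
    ∀ᶠ ε in 𝓝[≠] (0 : ℝ), c * |ε| * M ≤ η := by
  have hlim : Tendsto (fun ε : ℝ ↦ c * |ε| * M) (𝓝[≠] 0) (𝓝 0) :=
    (Continuous.tendsto' (by fun_prop) 0 0 (by simp)).mono_left nhdsWithin_le_nhds
  exact hlim.eventually_le_const hη

variable {V : Type*} [NormedAddCommGroup V] [NormedSpace ℝ V]

/-- The orbit `t ↦ θ + t • ω` of the linear flow with frequency vector `ω`. -/
def linearFlow (ω θ : V) : C(ℝ, V) := ⟨fun t ↦ θ + t • ω, by fun_prop⟩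

@[simp]
theorem linearFlow_apply (ω θ : V) (t : ℝ) : linearFlow ω θ t = θ + t • ω := rfl

variable {E : Type*} [NormedAddCommGroup E] [NormedSpace ℝ E]

/-- `G` is a uniform limit of derivatives `q` along the linear flow of bounded functions `Q`, i.e.
of coboundaries of the flow. -/
def IsAlmostCoboundary (ω : V) (G : V →ᵇ E) : Prop :=
  ∀ δ > 0, ∃ Q q : V →ᵇ E,
    (∀ θ t, HasDerivAt (fun s : ℝ ↦ Q (θ + s • ω)) (q (θ + t • ω)) t) ∧ ‖G - q‖ ≤ δ

namespace IsAlmostCoboundary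

variable {ω : V} {a η : ℝ}

theorem eventually_norm_greenOperator_le [CompleteSpace E] {G : V →ᵇ E}
    (hG : IsAlmostCoboundary ω G) (ha : a ≠ 0) (hη : 0 < η) :
    ∀ᶠ ε in 𝓝[≠] 0, ∀ θ, ‖greenOperator a ε (G.compContinuous (linearFlow ω θ))‖ ≤ η := by
  have ha' : 0 < |a| := abs_pos.2 ha
  obtain ⟨Q, q, hQ, hδ⟩ := hG (η / 2 * |a|) (by positivity)
  filter_upwards [eventually_isHyperbolic ha,
    eventually_mul_abs_mul_le (c := 4) (M := ‖Q‖) (half_pos hη)] with ε hε hsmall θ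
  calc ‖greenOperator a ε (G.compContinuous (linearFlow ω θ))‖
      ≤ 4 * |ε| * ‖Q.compContinuous (linearFlow ω θ)‖ + η / 2 * |a| / |a| :=
        hε.norm_greenOperator_le_of_norm_sub_le (p := q.compContinuous (linearFlow ω θ)) (hQ θ)
          (norm_compContinuous_sub_le hδ _)
    _ ≤ 4 * |ε| * ‖Q‖ + η / 2 := by
        rw [mul_div_cancel_right₀ _ ha'.ne']
        gcongr
        exact BoundedContinuousFunction.norm_compContinuous_le Q _
    _ ≤ η := by linarith

theorem eventually_norm_greenOperator_mul_le {𝔸 : Type*} [NormedRing 𝔸] [NormedAlgebra ℝ 𝔸]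
    [CompleteSpace 𝔸] {G : V →ᵇ 𝔸} (hG : IsAlmostCoboundary ω G) (ha : a ≠ 0) (hη : 0 < η) :
    ∀ᶠ ε in 𝓝[≠] 0, ∀ θ v, ‖greenOperator a ε
      (G.compContinuous (linearFlow ω θ) * greenOperator a ε v)‖ ≤ η * ‖v‖ := by
  have ha' : 0 < |a| := abs_pos.2 ha
  obtain ⟨Q, q, hQ, hδ⟩ := hG (η / 2 * |a| * |a|) (by positivity)
  filter_upwards [eventually_isHyperbolic ha,
    eventually_mul_abs_mul_le (c := 8) (M := ‖Q‖) (η := η / 2 * |a|) (by positivity)]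
    with ε hε hsmall θ v
  calc ‖greenOperator a ε (G.compContinuous (linearFlow ω θ) * greenOperator a ε v)‖
      ≤ (8 * |ε| * ‖Q.compContinuous (linearFlow ω θ)‖ + η / 2 * |a| * |a| / |a|) / |a| *
          ‖v‖ :=
        hε.norm_greenOperator_mul_greenOperator_le (p := q.compContinuous (linearFlow ω θ)) (hQ θ)
          (norm_compContinuous_sub_le hδ _) v
    _ ≤ (η / 2 * |a| + η / 2 * |a|) / |a| * ‖v‖ := by
        rw [mul_div_cancel_right₀ _ ha'.ne']
        gcongr ?_ / _ * _
        refine add_le_add_left (le_trans ?_ hsmall) _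
        gcongr
        exact BoundedContinuousFunction.norm_compContinuous_le Q _
    _ = η * ‖v‖ := by
        field_simp
        ring

end IsAlmostCoboundary

end Coboundary

section Torus

variable {ι : Type*} {T : ℝ}

/-- `G` has period `T` in each coordinate. -/
def IsMultiperiodic [DecidableEq ι] {β : Type*} (T : ℝ) (G : (ι → ℝ) → β) : Prop :=
  ∀ i, Function.Periodic G (Pi.single i T)

/-- The covering map `ι → ℝ` to the torus which identifies points that differ by multiples of `T`
in each coordinate. -/
def torusMk (T : ℝ) : C(ι → ℝ, UnitAddTorus ι) :=
  ⟨fun ψ i ↦ ((ψ i / T : ℝ) : UnitAddCircle), continuous_pi fun i ↦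
    (AddCircle.continuous_mk' 1).comp (by fun_prop)⟩

theorem isOpenQuotientMap_torusMk (hT : T ≠ 0) :
    IsOpenQuotientMap (torusMk T : (ι → ℝ) → UnitAddTorus ι) := by
  have hscale : IsOpenQuotientMap (fun x : ℝ ↦ x / T) := by
    simp_rw [div_eq_mul_inv]
    exact (Homeomorph.mulRight₀ T⁻¹ (inv_ne_zero hT)).isOpenQuotientMap
  exact .piMap fun _ ↦ QuotientAddGroup.isOpenQuotientMap_mk.comp hscale

theorem IsMultiperiodic.periodic_intCast_mul [DecidableEq ι] [Finite ι] {β : Type*}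
    {G : (ι → ℝ) → β} (hG : IsMultiperiodic T G) (n : ι → ℤ) :
    Function.Periodic G (fun i ↦ n i * T) := by
  cases nonempty_fintype ι
  have hsum : (∑ i, Pi.single i (n i * T)) = fun i ↦ n i * T :=
    Finset.univ_sum_single fun i ↦ (n i : ℝ) * T
  rw [← hsum]
  refine Finset.sum_induction _ (Function.Periodic G) (fun _ _ ↦ .add_period) (fun _ ↦ by simp)
    fun i _ ↦ ?_
  have hzsmul : Pi.single i (n i * T) = n i • (Pi.single i T : ι → ℝ) := by
    rw [← Pi.single_smul, zsmul_eq_mul]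
  exact hzsmul ▸ (hG i).zsmul (n i)

theorem IsMultiperiodic.factorsThrough_torusMk [DecidableEq ι] [Finite ι] {β : Type*}
    {G : (ι → ℝ) → β} (hG : IsMultiperiodic T G) (hT : T ≠ 0) :
    Function.FactorsThrough G (torusMk T) := by
  intro x y hxy
  have hdiff (i : ι) : ∃ n : ℤ, x i = y i + n * T := by
    obtain ⟨n, hn⟩ := QuotientAddGroup.eq_iff_sub_mem.1 (congrFun hxy i)
    refine ⟨n, ?_⟩
    simp only [zsmul_eq_mul, mul_one] at hn
    field_simp at hn
    linear_combination -hn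
  choose n hn using hdiff
  rw [show x = y + fun i ↦ n i * T from funext hn, hG.periodic_intCast_mul n]

theorem IsMultiperiodic.exists_comp_torusMk_eq [DecidableEq ι] [Finite ι] {β : Type*}
    [TopologicalSpace β] {G : C(ι → ℝ, β)} (hG : IsMultiperiodic T G) (hT : T ≠ 0) :
    ∃ F : C(UnitAddTorus ι, β), F.comp (torusMk T) = G :=
  ⟨(isOpenQuotientMap_torusMk hT).isQuotientMap.lift G (hG.factorsThrough_torusMk hT),
    (isOpenQuotientMap_torusMk hT).isQuotientMap.lift_comp G (hG.factorsThrough_torusMk hT)⟩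

variable [Fintype ι]

theorem mFourier_torusMk (n : ι → ℤ) (ψ : ι → ℝ) :
    UnitAddTorus.mFourier n (torusMk T ψ) =
      Complex.exp (2 * Real.pi * Complex.I / T * ∑ i, (ψ i : ℂ) * n i) := by
  simp only [UnitAddTorus.mFourier, torusMk, ContinuousMap.coe_mk, fourier_coe_apply]
  rw [← Complex.exp_sum, Finset.mul_sum]
  congr 1
  refine Finset.sum_congr rfl fun i _ ↦ ?_
  push_cast
  ring

theorem integral_fourier_div_eq_zero (hT : 0 < T) {k : ℤ} (hk : k ≠ 0) :
    ∫ x in Icc 0 T, fourier k ((x / T : ℝ) : UnitAddCircle) = 0 := by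
  have hTne : (T : ℂ) ≠ 0 := Complex.ofReal_ne_zero.2 hT.ne'
  have hfreq : 2 * Real.pi * Complex.I * k / T ≠ 0 := by simp [hk, hT.ne', Real.pi_ne_zero]
  have hexp (x : ℝ) : fourier k ((x / T : ℝ) : UnitAddCircle) =
      Complex.exp (2 * Real.pi * Complex.I * k / T * x) := by
    rw [fourier_coe_apply]
    congr 1
    push_cast
    ring
  have hperiod : Complex.exp (2 * Real.pi * Complex.I * k / T * T) = 1 := by
    rw [div_mul_cancel₀ _ hTne, mul_comm]
    exact Complex.exp_int_mul_two_pi_mul_I k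
  rw [integral_Icc_eq_integral_Ioc, ← intervalIntegral.integral_of_le hT.le]
  simp_rw [hexp]
  rw [integral_exp_mul_complex hfreq, hperiod, Complex.ofReal_zero, mul_zero, Complex.exp_zero,
    sub_self, zero_div]

theorem integral_mFourier_torusMk_eq_zero (hT : 0 < T) {n : ι → ℤ} (hn : n ≠ 0) :
    ∫ ψ in Icc (0 : ι → ℝ) (fun _ ↦ T), UnitAddTorus.mFourier n (torusMk T ψ) = 0 := by
  obtain ⟨j, hj⟩ := Function.ne_iff.1 hn
  calc ∫ ψ in Icc (0 : ι → ℝ) (fun _ ↦ T), UnitAddTorus.mFourier n (torusMk T ψ)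
      = ∏ i, ∫ x in Icc 0 T, fourier (n i) ((x / T : ℝ) : UnitAddCircle) := by
        rw [← pi_univ_Icc, volume_pi, Measure.restrict_pi_pi]
        exact integral_fintype_prod_eq_prod
          fun i x ↦ fourier (n i) ((x / T : ℝ) : UnitAddCircle)
    _ = 0 := Finset.prod_eq_zero (Finset.mem_univ j) (integral_fourier_div_eq_zero hT hj)

/-- The integral over the box `[0, T]^ι` of a function on the torus, as a functional. -/
def boxIntegral (T : ℝ) : C(UnitAddTorus ι, ℂ) →L[ℂ] ℂ :=
  have hint (F : C(UnitAddTorus ι, ℂ)) :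
      IntegrableOn (fun ψ ↦ F (torusMk T ψ)) (Icc (0 : ι → ℝ) fun _ ↦ T) :=
    (F.comp (torusMk T)).continuous.continuousOn.integrableOn_compact isCompact_Icc
  LinearMap.mkContinuous
    { toFun F := ∫ ψ in Icc (0 : ι → ℝ) (fun _ ↦ T), F (torusMk T ψ)
      map_add' F F' := integral_add (hint F) (hint F')
      map_smul' c _ := integral_const_mul c _ }
    (volume.real (Icc (0 : ι → ℝ) fun _ ↦ T))
    fun F ↦ (norm_setIntegral_le_of_norm_le_const isCompact_Icc.measure_lt_top
      fun _ _ ↦ F.norm_coe_le_norm _).trans_eq (mul_comm _ _)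

theorem boxIntegral_apply (T : ℝ) (F : C(UnitAddTorus ι, ℂ)) :
    boxIntegral T F = ∫ ψ in Icc (0 : ι → ℝ) (fun _ ↦ T), F (torusMk T ψ) := rfl

/-- The coboundaries of the linear flow on the torus: the continuous functions that have a
continuous primitive along the flow. -/
def flowCoboundaries (T : ℝ) (ω : ι → ℝ) : Submodule ℂ C(UnitAddTorus ι, ℂ) where
  carrier := {q | ∃ Q : C(UnitAddTorus ι, ℂ), ∀ θ t,
    HasDerivAt (fun s : ℝ ↦ Q (torusMk T (θ + s • ω))) (q (torusMk T (θ + t • ω))) t}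
  add_mem' := fun ⟨Q, hQ⟩ ⟨Q', hQ'⟩ ↦ ⟨Q + Q', fun θ t ↦ (hQ θ t).add (hQ' θ t)⟩
  zero_mem' := ⟨0, fun _ t ↦ hasDerivAt_const t 0⟩
  smul_mem' := fun c _ ⟨Q, hQ⟩ ↦ ⟨c • Q, fun θ t ↦ (hQ θ t).const_mul c⟩

/-- The frequency vector `ω` satisfies no nontrivial integer linear relation. -/
def IsNonresonant (ω : ι → ℝ) : Prop :=
  ∀ ν : ι → ℤ, ν ≠ 0 → ∑ i, ω i * (ν i : ℝ) ≠ 0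

variable {ω : ι → ℝ}

theorem IsNonresonant.mFourier_mem_flowCoboundaries (hω : IsNonresonant ω) (hT : T ≠ 0)
    {n : ι → ℤ} (hn : n ≠ 0) : UnitAddTorus.mFourier n ∈ flowCoboundaries T ω := by
  have hne : 2 * Real.pi * Complex.I / T * ∑ i, (ω i : ℂ) * n i ≠ 0 := by
    refine mul_ne_zero (by simp [hT, Real.pi_ne_zero]) ?_
    exact_mod_cast hω n hn
  set c : ℂ := 2 * Real.pi * Complex.I / T * ∑ i, (ω i : ℂ) * n i with hc
  refine ⟨c⁻¹ • UnitAddTorus.mFourier n, fun θ t ↦ ?_⟩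
  have hexp (s : ℝ) : UnitAddTorus.mFourier n (torusMk T (θ + s • ω)) =
      Complex.exp (c * s + 2 * Real.pi * Complex.I / T * ∑ i, (θ i : ℂ) * n i) := by
    rw [mFourier_torusMk]
    congr 1
    simp only [hc, Pi.add_apply, Pi.smul_apply, smul_eq_mul, Complex.ofReal_add,
      Complex.ofReal_mul, add_mul, Finset.sum_add_distrib, mul_add, mul_assoc, ← Finset.mul_sum]
    ring
  have hphase : HasDerivAt
      (fun s : ℝ ↦ c * s + 2 * Real.pi * Complex.I / T * ∑ i, (θ i : ℂ) * n i) c t := by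
    simpa using ((hasDerivAt_id t).ofReal_comp.const_mul c).add_const
      (2 * Real.pi * Complex.I / T * ∑ i, (θ i : ℂ) * n i)
  simp only [ContinuousMap.smul_apply, hexp]
  refine (hphase.cexp.const_mul c⁻¹).congr_deriv ?_
  rw [mul_comm _ c, inv_mul_cancel_left₀ hne]

/-- The closed subspace of all `F` with `V • F - ∫ F ∈ closure (flowCoboundaries T ω)`, where `V`
is the volume of the box, contains every character, hence is everything. -/
theorem IsNonresonant.mem_closure_flowCoboundaries (hω : IsNonresonant ω) (hT : 0 < T)
    {F : C(UnitAddTorus ι, ℂ)} (hF : boxIntegral T F = 0) :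
    F ∈ (flowCoboundaries T ω).topologicalClosure := by
  set boxVol : ℂ := boxIntegral T (1 : C(UnitAddTorus ι, ℂ)) with hboxVol
  have hboxVol_eq : boxVol = (T ^ Fintype.card ι : ℝ) := by
    have hvol := Real.volume_Icc_pi_toReal (ι := ι) (a := 0) (b := fun _ ↦ T) fun _ ↦ hT.le
    simp [hboxVol, boxIntegral_apply, measureReal_def, hvol]
  let Λ : C(UnitAddTorus ι, ℂ) →L[ℂ] C(UnitAddTorus ι, ℂ) :=
    boxVol • .id ℂ _ - (boxIntegral T).smulRight 1
  have hspan : (Submodule.span ℂ (range (UnitAddTorus.mFourier (d := ι)))).topologicalClosure ≤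
      (flowCoboundaries T ω).topologicalClosure.comap (Λ : _ →ₗ[ℂ] _) := by
    refine Submodule.topologicalClosure_minimal _ (Submodule.span_le.2 ?_)
      ((Submodule.isClosed_topologicalClosure _).preimage Λ.continuous)
    rintro _ ⟨n, rfl⟩
    suffices Λ (UnitAddTorus.mFourier n) ∈ flowCoboundaries T ω from
      Submodule.le_topologicalClosure _ this
    rcases eq_or_ne n 0 with rfl | hn
    · simp [Λ, hboxVol, UnitAddTorus.mFourier_zero]
    · have hmean : boxIntegral T (UnitAddTorus.mFourier n) = 0 :=
        integral_mFourier_torusMk_eq_zero hT hn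
      simpa [Λ, hmean] using Submodule.smul_mem _ _ (hω.mFourier_mem_flowCoboundaries hT.ne' hn)
  rw [UnitAddTorus.span_mFourier_closure_eq_top] at hspan
  have hΛF : boxVol • F ∈ (flowCoboundaries T ω).topologicalClosure := by
    simpa [Λ, hF] using hspan (Submodule.mem_top (x := F))
  refine (Submodule.smul_mem_iff _ ?_).1 hΛF
  rw [hboxVol_eq, Complex.ofReal_ne_zero]
  positivity

theorem IsNonresonant.isAlmostCoboundary [DecidableEq ι] (hω : IsNonresonant ω) (hT : 0 < T)
    {G : (ι → ℝ) →ᵇ ℝ} (hG : IsMultiperiodic T G)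
    (hmean : ∫ ψ in Icc (0 : ι → ℝ) (fun _ ↦ T), G ψ = 0) : IsAlmostCoboundary ω G := by
  intro δ hδ
  let Gℂ : C(ι → ℝ, ℂ) := (⟨Complex.ofReal, Complex.continuous_ofReal⟩ : C(ℝ, ℂ)).comp G
  have hGℂ : IsMultiperiodic T Gℂ := fun i ψ ↦ congrArg Complex.ofReal (hG i ψ)
  obtain ⟨F, hF⟩ := hGℂ.exists_comp_torusMk_eq hT.ne'
  have hF' (ψ : ι → ℝ) : F (torusMk T ψ) = G ψ := DFunLike.congr_fun hF ψ
  have hmeanF : boxIntegral T F = 0 := by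
    simp_rw [boxIntegral_apply, hF']
    rw [integral_complex_ofReal, hmean, Complex.ofReal_zero]
  obtain ⟨q, ⟨Q, hQ⟩, hq⟩ :=
    Metric.mem_closure_iff.1 (hω.mem_closure_flowCoboundaries hT hmeanF) δ hδ
  let pullRe (f : C(UnitAddTorus ι, ℂ)) : (ι → ℝ) →ᵇ ℝ :=
    Complex.reCLM.compLeftContinuousBounded (ι → ℝ)
      ((BoundedContinuousFunction.mkOfCompact f).compContinuous (torusMk T))
  refine ⟨pullRe Q, pullRe q,
    fun θ t ↦ Complex.reCLM.hasFDerivAt.comp_hasDerivAt t (hQ θ t), ?_⟩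
  refine (BoundedContinuousFunction.norm_le hδ.le).2 fun ψ ↦ ?_
  calc ‖(G - pullRe q) ψ‖ = |((F - q) (torusMk T ψ)).re| := by simp [pullRe, hF']
    _ ≤ ‖F - q‖ := (Complex.abs_re_le_norm _).trans ((F - q).norm_coe_le_norm _)
    _ ≤ δ := by rw [← dist_eq_norm]; exact hq.le

end Torus

section UniformAnalyticity

open scoped NNReal Nat

variable {V F : Type*} [NormedAddCommGroup V] [NormedSpace ℝ V] [NormedAddCommGroup F]
  [NormedSpace ℝ F]

/-- The Taylor series of `H` at `q`; unlike in `ftaylorSeries`, the factorials are included, so that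
`H (q + v)` is the sum of the values at `v` when `H` is analytic. -/
def taylorSeries (H : V → F) (q : V) : FormalMultilinearSeries ℝ V F :=
  fun n ↦ (n ! : ℝ)⁻¹ • iteratedFDeriv ℝ n H q

/-- The Taylor series of `H` at the points of `s` converge to `H` on balls of one radius `r`, with
Cauchy estimates that are uniform over `s`. -/
def UniformlyAnalyticOn (H : V → F) (s : Set V) : Prop :=
  ∃ r > 0, ∃ C, ∀ q ∈ s, (∀ n, ‖taylorSeries H q n‖ * r ^ n ≤ C) ∧
    ∀ v, ‖v‖ < r → HasSum (fun n ↦ taylorSeries H q n fun _ ↦ v) (H (q + v))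

theorem exists_norm_changeOrigin_mul_pow_le {P : FormalMultilinearSeries ℝ V F} {r : ℝ≥0}
    (hr : (r + r : ENNReal) < P.radius) :
    ∃ C : ℝ, ∀ x, ‖x‖₊ < r → ∀ k, ‖P.changeOrigin x k‖ * r ^ k ≤ C := by
  have hrad : (r : ENNReal) < P.radius := lt_of_le_of_lt le_self_add hr
  refine ⟨(∑' s : Σ k l : ℕ, { s : Finset (Fin (k + l)) // s.card = l },
    ‖P (s.1 + s.2.1)‖₊ * r ^ s.2.1 * r ^ s.1 : ℝ≥0), fun x hx k ↦ ?_⟩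
  have hx' : (‖x‖₊ : ENNReal) < P.radius := (ENNReal.coe_lt_coe.2 hx).trans hrad
  have hbound : ‖P.changeOrigin x k‖₊ ≤
      ∑' s : Σ l : ℕ, { s : Finset (Fin (k + l)) // s.card = l }, ‖P (k + s.1)‖₊ * r ^ s.1 :=
    (P.nnnorm_changeOrigin_le k hx').trans <| Summable.tsum_le_tsum (fun s ↦ by gcongr)
      (P.changeOriginSeries_summable_aux₂ hx' k) (P.changeOriginSeries_summable_aux₂ hrad k)
  have hslice := NNReal.tsum_comp_le_tsum_of_inj (P.changeOriginSeries_summable_aux₁ hr)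
    (sigma_mk_injective (i := k))
  exact_mod_cast (mul_le_mul_left hbound (r ^ k)).trans ((NNReal.tsum_mul_right _ _).symm.trans_le
    hslice)

variable {H : V → F}

theorem UniformlyAnalyticOn.mono {s t : Set V} (hst : s ⊆ t) (ht : UniformlyAnalyticOn H t) :
    UniformlyAnalyticOn H s := by
  obtain ⟨r, hr, C, hrC⟩ := ht
  exact ⟨r, hr, C, fun q hq ↦ hrC q (hst hq)⟩

theorem UniformlyAnalyticOn.union {s t : Set V} (hs : UniformlyAnalyticOn H s)
    (ht : UniformlyAnalyticOn H t) : UniformlyAnalyticOn H (s ∪ t) := by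
  obtain ⟨r, hr, C, hrC⟩ := hs
  obtain ⟨r', hr', C', hrC'⟩ := ht
  refine ⟨min r r', lt_min hr hr', max C C', fun q hq ↦ ⟨fun n ↦ ?_, fun v hv ↦ ?_⟩⟩
  · rcases hq with hq | hq
    · refine le_trans ?_ (((hrC q hq).1 n).trans (le_max_left _ _))
      gcongr
      exact min_le_left _ _
    · refine le_trans ?_ (((hrC' q hq).1 n).trans (le_max_right _ _))
      gcongr
      exact min_le_right _ _
  · rcases hq with hq | hq
    · exact (hrC q hq).2 v (hv.trans_le (min_le_left _ _))
    · exact (hrC' q hq).2 v (hv.trans_le (min_le_right _ _))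

theorem taylorSeries_add_eq_of_periodic {c : V} (hc : Function.Periodic H c) (q : V) :
    taylorSeries H (q + c) = taylorSeries H q := by
  ext1 n
  rw [taylorSeries, taylorSeries, ← iteratedFDeriv_comp_add_right, show (fun z ↦ H (z + c)) = H from
    funext hc]

theorem UniformlyAnalyticOn.of_periodic {s t : Set V} (hs : UniformlyAnalyticOn H s)
    (ht : ∀ q ∈ t, ∃ c, Function.Periodic H c ∧ q + c ∈ s) : UniformlyAnalyticOn H t := by
  obtain ⟨r, hr, C, hrC⟩ := hs
  refine ⟨r, hr, C, fun q hq ↦ ?_⟩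
  obtain ⟨c, hc, hqc⟩ := ht q hq
  have hshift := hrC _ hqc
  simp_rw [taylorSeries_add_eq_of_periodic hc, add_right_comm q c, hc _] at hshift
  exact hshift

variable [CompleteSpace F]

theorem norm_taylorSeries_le_of_hasFPowerSeriesOnBall {P : FormalMultilinearSeries ℝ V F} {q : V}
    {R : ENNReal} (hP : HasFPowerSeriesOnBall H P q R) (n : ℕ) :
    ‖taylorSeries H q n‖ ≤ ‖P n‖ := by
  suffices hderiv : ‖iteratedFDeriv ℝ n H q‖ ≤ n ! * ‖P n‖ by
    rw [taylorSeries, norm_smul, norm_inv, Real.norm_natCast]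
    exact inv_mul_le_of_le_mul₀ (by positivity) (by positivity) hderiv
  refine ContinuousMultilinearMap.opNorm_le_bound (by positivity) fun m ↦ ?_
  rw [hP.iteratedFDeriv_eq_sum_of_completeSpace]
  have hterm (σ : Equiv.Perm (Fin n)) : ‖P n fun i ↦ m (σ i)‖ ≤ ‖P n‖ * ∏ i, ‖m i‖ := by
    rw [← Equiv.prod_comp σ fun i ↦ ‖m i‖]
    exact (P n).le_opNorm _
  calc ‖∑ σ : Equiv.Perm (Fin n), P n fun i ↦ m (σ i)‖
      ≤ ∑ _σ : Equiv.Perm (Fin n), ‖P n‖ * ∏ i, ‖m i‖ := norm_sum_le_of_le _ fun σ _ ↦ hterm σ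
    _ = n ! * ‖P n‖ * ∏ i, ‖m i‖ := by
        rw [Finset.sum_const, Finset.card_univ, Fintype.card_perm, Fintype.card_fin, nsmul_eq_mul,
          mul_assoc]

theorem exists_mem_nhds_uniformlyAnalyticOn {p : V} (hH : AnalyticAt ℝ H p) :
    ∃ s ∈ 𝓝 p, UniformlyAnalyticOn H s := by
  obtain ⟨P, R, hP⟩ := hH
  obtain ⟨ρ, hρ0, hρR⟩ := ENNReal.lt_iff_exists_nnreal_btwn.1 hP.r_pos
  have hρ : 0 < ρ := by exact_mod_cast hρ0
  obtain ⟨r, hr, hrR⟩ : ∃ r : ℝ≥0, 0 < r ∧ (r + r : ENNReal) < R :=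
    ⟨ρ / 2, by positivity, by rwa [← ENNReal.coe_add, add_halves]⟩
  obtain ⟨C, hC⟩ := exists_norm_changeOrigin_mul_pow_le (hrR.trans_le hP.r_le)
  refine ⟨ball p r, ball_mem_nhds p hr, r, hr, C, fun q hq ↦ ?_⟩
  have hqp : ‖q - p‖₊ < r := by exact_mod_cast mem_ball_iff_norm.1 hq
  have hqpR : (‖q - p‖₊ : ENNReal) < R :=
    (ENNReal.coe_lt_coe.2 hqp).trans (lt_of_le_of_lt le_self_add hrR)
  have hPq : HasFPowerSeriesOnBall H (P.changeOrigin (q - p)) q (R - ‖q - p‖₊) := by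
    simpa using hP.changeOrigin hqpR
  refine ⟨fun n ↦ le_trans ?_ (hC _ hqp n), fun v hv ↦ hPq.hasSum_iteratedFDeriv ?_⟩
  · gcongr
    exact norm_taylorSeries_le_of_hasFPowerSeriesOnBall hPq n
  · have hvr : (‖v‖₊ : ENNReal) < r := by exact_mod_cast hv
    rw [mem_eball, edist_zero_right, lt_tsub_iff_right]
    exact (ENNReal.add_lt_add hvr (ENNReal.coe_lt_coe.2 hqp)).trans hrR

theorem uniformlyAnalyticOn_of_isCompact {K : Set V} (hK : IsCompact K)
    (hH : ∀ p ∈ K, AnalyticAt ℝ H p) : UniformlyAnalyticOn H K := by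
  refine hK.induction_on ⟨1, one_pos, 0, by simp⟩ (fun _ _ ↦ .mono) (fun _ _ ↦ .union)
    fun p hp ↦ ?_
  obtain ⟨s, hs, hHs⟩ := exists_mem_nhds_uniformlyAnalyticOn (hH p hp)
  exact ⟨s, mem_nhdsWithin_of_mem_nhds hs, hHs⟩

end UniformAnalyticity

section Superposition

variable {X V F : Type*} [TopologicalSpace X] [NormedAddCommGroup V] [NormedSpace ℝ V]
  [NormedAddCommGroup F] [NormedSpace ℝ F]

section Pointwise

open BoundedContinuousFunction

variable {ι : Type*} [Fintype ι] (M : X →ᵇ ContinuousMultilinearMap ℝ (fun _ : ι ↦ V) F)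

theorem norm_multilinear_apply_le (v : ι → X →ᵇ V) (x : X) :
    ‖M x fun i ↦ v i x‖ ≤ ‖M‖ * ∏ i, ‖v i‖ :=
  ((M x).le_of_opNorm_le (M.norm_coe_le_norm x) _).trans <| by
    gcongr with i
    exact (v i).norm_coe_le_norm x

/-- A bounded continuous family `M` of multilinear maps acts pointwise on bounded continuous
functions: `(v₁, …, vₙ) ↦ (x ↦ M x (v₁ x, …, vₙ x))`. -/
def pointwiseMultilinear : ContinuousMultilinearMap ℝ (fun _ : ι ↦ X →ᵇ V) (X →ᵇ F) :=
  MultilinearMap.mkContinuous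
    { toFun v := ofNormedAddCommGroup (fun x ↦ M x fun i ↦ v i x)
        (M.continuous.eval (continuous_pi fun i ↦ (v i).continuous)) (‖M‖ * ∏ i, ‖v i‖)
        (norm_multilinear_apply_le M v)
      map_update_add' v i a b := by
        ext x
        exact ((M x).compContinuousLinearMap fun _ ↦ evalCLM ℝ x).map_update_add v i a b
      map_update_smul' v i c a := by
        ext x
        exact ((M x).compContinuousLinearMap fun _ ↦ evalCLM ℝ x).map_update_smul v i c a }
    ‖M‖ fun v ↦ norm_ofNormedAddCommGroup_le _ (by positivity) (norm_multilinear_apply_le M v)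

theorem norm_pointwiseMultilinear_le : ‖pointwiseMultilinear M‖ ≤ ‖M‖ :=
  MultilinearMap.mkContinuous_norm_le _ (norm_nonneg M) _

end Pointwise

variable [CompleteSpace F] {H : V → F}

theorem continuous_taylorSeries (hH : ∀ p, AnalyticAt ℝ H p) (n : ℕ) :
    Continuous fun q ↦ taylorSeries H q n := by
  have hsmooth : ContDiff ℝ n H := contDiff_iff_contDiffAt.2 fun p ↦ (hH p).contDiffAt
  exact (hsmooth.continuous_iteratedFDeriv le_rfl).const_smul (n.factorial : ℝ)⁻¹

theorem UniformlyAnalyticOn.exists_superpositionSeries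
    (hH : ∀ p, AnalyticAt ℝ H p) {w : C(X, V)} (hw : UniformlyAnalyticOn H (range w)) :
    ∃ r > 0, ∃ P : FormalMultilinearSeries ℝ (X →ᵇ V) (X →ᵇ F), ENNReal.ofReal r ≤ P.radius ∧
      ∀ v : X →ᵇ V, ‖v‖ < r → ∀ x, HasSum (fun n ↦ P n (fun _ ↦ v) x) (H (w x + v x)) := by
  obtain ⟨r, hr, C, hrC⟩ := hw
  have hbound (n : ℕ) (x : X) : ‖taylorSeries H (w x) n‖ ≤ C / r ^ n :=
    (le_div_iff₀ (by positivity)).2 ((hrC _ (mem_range_self x)).1 n)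
  let M (n : ℕ) : X →ᵇ V [×n]→L[ℝ] F := .ofNormedAddCommGroup (fun x ↦ taylorSeries H (w x) n)
    ((continuous_taylorSeries hH n).comp w.continuous) _ (hbound n)
  refine ⟨r, hr, fun n ↦ pointwiseMultilinear (M n), ?_, fun v hv x ↦
    (hrC _ (mem_range_self x)).2 (v x) ((v.norm_coe_le_norm x).trans_lt hv)⟩
  refine FormalMultilinearSeries.le_radius_of_bound _ (max C 0) fun n ↦ ?_
  rw [Real.coe_toNNReal r hr.le, ← le_div_iff₀ (by positivity)]
  refine (norm_pointwiseMultilinear_le _).trans ?_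
  refine (BoundedContinuousFunction.norm_le (by positivity)).2 fun x ↦ ?_
  exact (hbound n x).trans (by gcongr; exact le_max_left _ _)

theorem UniformlyAnalyticOn.analyticAt_superposition
    (hH : ∀ p, AnalyticAt ℝ H p) {w : C(X, V)} (hw : UniformlyAnalyticOn H (range w))
    {N : (X →ᵇ V) → X →ᵇ F} (hN : ∀ v x, N v x = H (w x + v x)) : AnalyticAt ℝ N 0 := by
  obtain ⟨r, hr, P, hrad, hP⟩ := hw.exists_superpositionSeries hH
  refine ⟨P, ENNReal.ofReal r, hrad, by simpa using hr, fun {v} hv ↦ ?_⟩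
  have hvr : ‖v‖ < r := by
    rwa [mem_eball, edist_zero_right, ← ofReal_norm, ENNReal.ofReal_lt_ofReal_iff hr] at hv
  have hsum := P.hasSum (eball_subset_eball hrad hv)
  have hlim : P.sum v = N (0 + v) := by
    ext x
    rw [zero_add, hN]
    exact (hsum.mapL (BoundedContinuousFunction.evalCLM ℝ x)).unique (hP v hvr x)
  rwa [← hlim]

/-- The map `(θ, u) ↦ (x ↦ (u x, θ))`. -/
def pairConst (X V F : Type*) [TopologicalSpace X] [NormedAddCommGroup V] [NormedSpace ℝ V]
    [NormedAddCommGroup F] [NormedSpace ℝ F] : F × (X →ᵇ V) →L[ℝ] X →ᵇ V × F :=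
  have hbound (q : F × (X →ᵇ V)) (x : X) : ‖(q.2 x, q.1)‖ ≤ ‖q‖ :=
    max_le ((q.2.norm_coe_le_norm x).trans (norm_snd_le q)) (norm_fst_le q)
  LinearMap.mkContinuous
    { toFun q := .ofNormedAddCommGroup (fun x ↦ (q.2 x, q.1)) (by fun_prop) ‖q‖ (hbound q)
      map_add' _ _ := rfl
      map_smul' _ _ := rfl }
    1 fun q ↦ by
      rw [one_mul]
      exact BoundedContinuousFunction.norm_ofNormedAddCommGroup_le _ (norm_nonneg q) (hbound q)

@[simp]
theorem pairConst_apply {X V F : Type*} [TopologicalSpace X] [NormedAddCommGroup V]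
    [NormedSpace ℝ V] [NormedAddCommGroup F] [NormedSpace ℝ F] (q : F × (X →ᵇ V)) (x : X) :
    pairConst X V F q x = (q.2 x, q.1) := rfl

end Superposition

section ImplicitFunction

open scoped NNReal

variable {E : Type*} [NormedAddCommGroup E] [NormedSpace ℝ E]

theorem norm_le_mul_norm_add_of_norm_apply_apply_le {T : E →L[ℝ] E} {v : E} {β : ℝ} (hβ : ‖T‖ ≤ β)
    (hv : ‖T (T v)‖ ≤ 1 / 2 * ‖v‖) : ‖v‖ ≤ 2 * (1 + β) * ‖v + T v‖ := by
  have hsplit : v = T (T v) + (v + T v - T (v + T v)) := by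
    rw [map_add]
    abel
  have hnorm : ‖v‖ ≤ 1 / 2 * ‖v‖ + (‖v + T v‖ + β * ‖v + T v‖) :=
    calc ‖v‖ = ‖T (T v) + (v + T v - T (v + T v))‖ := congrArg _ hsplit
      _ ≤ _ := norm_add_le_of_le hv (norm_sub_le_of_le le_rfl (T.le_of_opNorm_le hβ _))
  linarith

theorem exists_continuousLinearEquiv_eq_one_add [CompleteSpace E] {T : E →L[ℝ] E}
    (hT : ‖T * T‖ < 1) : ∃ L : E ≃L[ℝ] E, (L : E →L[ℝ] E) = 1 + T := by
  have hfactor : 1 - T * T = (1 + T) * (1 - T) := by noncomm_ring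
  have hcomm : Commute (1 + T) (1 - T) :=
    (Commute.one_left _).add_left ((Commute.one_right T).sub_right (Commute.refl T))
  obtain ⟨U, hU⟩ := (hcomm.isUnit_mul_iff.1 (hfactor ▸ isUnit_one_sub_of_norm_lt_one hT)).1
  exact ⟨ContinuousLinearEquiv.ofUnit U, hU⟩

/-- On `closedBall 0 r`, the simplified Newton iteration `u ↦ u - L⁻¹ (f u)` is a contraction which
moves `0` by little: `L⁻¹` is bounded by `K`, and `f` differs from `L` by a map of Lipschitz
constant `(2 * K)⁻¹`. -/
structure IsNewtonBall (f : E → E) (L : E ≃L[ℝ] E) (K : ℝ≥0) (r : ℝ) : Prop where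
  bound_pos : 0 < K
  radius_pos : 0 < r
  norm_le_mul_norm : ∀ v, ‖v‖ ≤ K * ‖L v‖
  approximates : ApproximatesLinearOn f (L : E →L[ℝ] E) (closedBall 0 r) (2 * K)⁻¹
  norm_apply_zero_le : 4 * K * ‖f 0‖ ≤ r

namespace IsNewtonBall

variable {f : E → E} {L : E ≃L[ℝ] E} {K : ℝ≥0} {r : ℝ}

theorem norm_sub_le (h : IsNewtonBall f L K r) {u v : E} (hu : u ∈ closedBall 0 r)
    (hv : v ∈ closedBall 0 r) : ‖u - v‖ ≤ 2 * K * ‖f u - f v‖ := by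
  have hK : (0 : ℝ) < K := h.bound_pos
  have happrox : ‖f u - f v - L (u - v)‖ ≤ (2 * K : ℝ)⁻¹ * ‖u - v‖ := by
    exact_mod_cast h.approximates u hu v hv
  have hnorm : ‖u - v‖ ≤ K * (‖f u - f v‖ + (2 * K : ℝ)⁻¹ * ‖u - v‖) :=
    calc ‖u - v‖ ≤ K * ‖f u - f v - (f u - f v - L (u - v))‖ := by
          rw [sub_sub_cancel]
          exact h.norm_le_mul_norm _
      _ ≤ _ := by
          gcongr
          exact norm_sub_le_of_le le_rfl happrox
  field_simp at hnorm
  linarith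

theorem eq_of_apply_eq (h : IsNewtonBall f L K r) {u v : E} (hu : u ∈ closedBall 0 r)
    (hv : v ∈ closedBall 0 r) (huv : f u = f v) : u = v := by
  simpa [huv, sub_eq_zero] using h.norm_sub_le hu hv

theorem norm_le (h : IsNewtonBall f L K r) {u : E} (hu : u ∈ closedBall 0 r) (hfu : f u = 0) :
    ‖u‖ ≤ 2 * K * ‖f 0‖ := by
  simpa [hfu] using h.norm_sub_le hu (mem_closedBall_self h.radius_pos.le)

theorem exists_zero [CompleteSpace E] (h : IsNewtonBall f L K r) :
    ∃ u ∈ closedBall 0 r, f u = 0 := by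
  have hK : (0 : ℝ) < K := h.bound_pos
  let Linv : (L : E →L[ℝ] E).NonlinearRightInverse :=
    ⟨L.symm, K, fun y ↦ by simpa using h.norm_le_mul_norm (L.symm y), L.apply_symm_apply⟩
  refine h.approximates.surjOn_closedBall_of_nonlinearRightInverse Linv h.radius_pos.le
    Subset.rfl ?_
  have hgap : (K : ℝ)⁻¹ - (2 * K : ℝ)⁻¹ = (2 * K : ℝ)⁻¹ := by
    field_simp
    norm_num
  rw [mem_closedBall, dist_zero_left, NNReal.coe_inv, NNReal.coe_mul, NNReal.coe_ofNat, hgap,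
    ← div_eq_inv_mul, le_div_iff₀ (by positivity)]
  nlinarith [h.norm_apply_zero_le, norm_nonneg (f 0)]

theorem isInvertible_of_hasFDerivAt [CompleteSpace E] (h : IsNewtonBall f L K r) {u : E}
    (hu : u ∈ ball 0 r) {f' : E →L[ℝ] E} (hf : HasFDerivAt f f' u) : f'.IsInvertible := by
  have hK : (0 : ℝ) < K := h.bound_pos
  have hclose : ‖(L : E →L[ℝ] E) - f'‖ ≤ (2 * K : ℝ)⁻¹ := by
    rw [norm_sub_rev]
    exact_mod_cast (hf.sub (L : E →L[ℝ] E).hasFDerivAt).le_of_lipschitzOn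
      (mem_of_superset (isOpen_ball.mem_nhds hu) ball_subset_closedBall)
      (ApproximatesLinearOn.approximatesLinearOn_iff_lipschitzOnWith.1 h.approximates)
  have hsmall : ‖(L.symm : E →L[ℝ] E) ∘L ((L : E →L[ℝ] E) - f')‖ < 1 := by
    refine lt_of_le_of_lt (ContinuousLinearMap.opNorm_le_bound _ (M := 1 / 2) (by norm_num)
      fun v ↦ ?_) (by norm_num)
    calc ‖L.symm (((L : E →L[ℝ] E) - f') v)‖ ≤ K * ‖((L : E →L[ℝ] E) - f') v‖ := by
          simpa using h.norm_le_mul_norm (L.symm (((L : E →L[ℝ] E) - f') v))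
      _ ≤ K * ((2 * K : ℝ)⁻¹ * ‖v‖) := by
          gcongr
          exact ContinuousLinearMap.le_of_opNorm_le _ hclose v
      _ = 1 / 2 * ‖v‖ := by field_simp
  obtain ⟨U, hU⟩ := isUnit_one_sub_of_norm_lt_one hsmall
  have hfactor : f' = (L : E →L[ℝ] E) ∘L
      (1 - (L.symm : E →L[ℝ] E) ∘L ((L : E →L[ℝ] E) - f')) := by
    ext v
    simp
  rw [hfactor, ← hU]
  exact ContinuousLinearMap.isInvertible_equiv.comp ⟨ContinuousLinearEquiv.ofUnit U, rfl⟩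

end IsNewtonBall

variable [CompleteSpace E] {W : Type*} [NormedAddCommGroup W] [NormedSpace ℝ W] [CompleteSpace W]

open scoped ContDiff in
theorem exists_analytic_zero_of_isNewtonBall {F : W × E → E} {L : W → E ≃L[ℝ] E} {K : ℝ≥0} {r : ℝ}
    (hF : ∀ p, AnalyticAt ℝ F p) (h : ∀ θ, IsNewtonBall (fun u ↦ F (θ, u)) (L θ) K r) :
    ∃ S : W → E, (∀ θ, S θ ∈ closedBall 0 r ∧ F (θ, S θ) = 0) ∧ ∀ θ, AnalyticAt ℝ S θ := by
  choose S hball hzero using fun θ ↦ (h θ).exists_zero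
  refine ⟨S, fun θ ↦ ⟨hball θ, hzero θ⟩, fun θ ↦ ?_⟩
  have hS : S θ ∈ ball 0 r := by
    have hnorm := (h θ).norm_le (hball θ) (hzero θ)
    have hsmall := (h θ).norm_apply_zero_le
    rw [mem_ball_zero_iff]
    linarith [(h θ).radius_pos]
  have hCD : ContDiffAt ℝ ω F (θ, S θ) := (hF _).contDiffAt
  have hinv : (fderiv ℝ F (θ, S θ) ∘L .inr ℝ W E).IsInvertible :=
    (h θ).isInvertible_of_hasFDerivAt hS
      ((hF (θ, S θ)).differentiableAt.hasFDerivAt.comp (S θ) (hasFDerivAt_prodMk_right θ (S θ)))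
  have hψ := hCD.contDiffAt_implicitFunction (by simp) hinv
  set ψ := hCD.implicitFunction (by simp) hinv
  have hψθ : ψ θ = S θ := hCD.implicitFunction_apply_self _ hinv
  have hψball : ∀ᶠ θ' in 𝓝 θ, ψ θ' ∈ ball 0 r :=
    hψ.continuousAt.eventually_mem (isOpen_ball.mem_nhds (hψθ ▸ hS))
  have heq : ψ =ᶠ[𝓝 θ] S := by
    filter_upwards [hψball, hCD.eventually_apply_implicitFunction (by simp) hinv] with θ' hθ' hz
    exact (h θ').eq_of_apply_eq (ball_subset_closedBall hθ') (hball θ')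
      (by rw [hz, hzero, hzero])
  exact (hψ.congr_of_eventuallyEq heq.symm).analyticAt

end ImplicitFunction

section PeriodicAnalytic

theorem exists_intCast_mul_add_mem_Icc {ι : Type*} {T : ℝ} (hT : 0 < T) (ψ : ι → ℝ) :
    ∃ n : ι → ℤ, ψ + (fun i ↦ n i * T) ∈ Icc (0 : ι → ℝ) fun _ ↦ T := by
  have hmem (i : ι) : ψ i - toIcoDiv hT 0 (ψ i) * T ∈ Ico 0 T := by
    rw [← zsmul_eq_mul]
    exact toIcoMod_mem_Ico' hT (ψ i)
  refine ⟨fun i ↦ -toIcoDiv hT 0 (ψ i), fun i ↦ ?_, fun i ↦ ?_⟩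
  · simpa [← sub_eq_add_neg] using (hmem i).1
  · simpa [← sub_eq_add_neg] using (hmem i).2.le

theorem UniformlyAnalyticOn.exists_norm_le {V F : Type*} [NormedAddCommGroup V] [NormedSpace ℝ V]
    [NormedAddCommGroup F] [NormedSpace ℝ F] {H : V → F} {s : Set V}
    (hs : UniformlyAnalyticOn H s) : ∃ C, ∀ q ∈ s, ‖H q‖ ≤ C := by
  obtain ⟨r, -, C, hrC⟩ := hs
  exact ⟨C, fun q hq ↦ by simpa [taylorSeries] using (hrC q hq).1 0⟩

variable {ι : Type*}

/-- The partial derivative in `x` of a function of `x : ℝ` and an angle variable. -/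
def spatialDeriv (h : ℝ → (ι → ℝ) → ℝ) (x : ℝ) (ψ : ι → ℝ) : ℝ := deriv (fun y ↦ h y ψ) x

variable [Fintype ι] [DecidableEq ι]

/-- `h x ψ` is jointly real analytic, and has period `T` in each coordinate of the angle `ψ`. -/
structure IsPeriodicAnalytic (T : ℝ) (h : ℝ → (ι → ℝ) → ℝ) : Prop where
  period_pos : 0 < T
  analyticAt : ∀ p, AnalyticAt ℝ (Function.uncurry h) p
  periodic : ∀ x, IsMultiperiodic T (h x)

namespace IsPeriodicAnalytic

variable {T : ℝ} {h : ℝ → (ι → ℝ) → ℝ}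

theorem comp_const_add (hh : IsPeriodicAnalytic T h) (c : ℝ) :
    IsPeriodicAnalytic T fun x ↦ h (c + x) where
  period_pos := hh.period_pos
  analyticAt _ := (hh.analyticAt _).comp_of_eq
    (f := fun q : ℝ × (ι → ℝ) ↦ (c + q.1, q.2))
    ((analyticAt_const.add analyticAt_fst).prod analyticAt_snd) rfl
  periodic x := hh.periodic (c + x)

protected theorem continuous (hh : IsPeriodicAnalytic T h) : Continuous (Function.uncurry h) :=
  continuous_iff_continuousAt.2 fun p ↦ (hh.analyticAt p).continuousAt

theorem hasDerivAt_fderiv (hh : IsPeriodicAnalytic T h) (x : ℝ) (ψ : ι → ℝ) :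
    HasDerivAt (fun y ↦ h y ψ) (fderiv ℝ (Function.uncurry h) (x, ψ) (1, 0)) x :=
  HasFDerivAt.comp_hasDerivAt (l := Function.uncurry h) x
    (hh.analyticAt (x, ψ)).differentiableAt.hasFDerivAt
    ((hasDerivAt_id' x).prodMk (hasDerivAt_const x ψ))

theorem hasDerivAt_spatialDeriv (hh : IsPeriodicAnalytic T h) (x : ℝ) (ψ : ι → ℝ) :
    HasDerivAt (fun y ↦ h y ψ) (spatialDeriv h x ψ) x :=
  (hh.hasDerivAt_fderiv x ψ).differentiableAt.hasDerivAt

protected theorem spatialDeriv (hh : IsPeriodicAnalytic T h) :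
    IsPeriodicAnalytic T (spatialDeriv h) where
  period_pos := hh.period_pos
  analyticAt p := by
    have huncurry : Function.uncurry (spatialDeriv h) =
        fun q ↦ fderiv ℝ (Function.uncurry h) q (1, 0) :=
      funext fun q ↦ (hh.hasDerivAt_fderiv q.1 q.2).deriv
    rw [huncurry]
    exact ((ContinuousLinearMap.apply ℝ ℝ ((1 : ℝ), (0 : ι → ℝ))).analyticAt _).comp
      (hh.analyticAt p).fderiv
  periodic x i ψ := by simp only [spatialDeriv, hh.periodic _ i ψ]

theorem uniformlyAnalyticOn (hh : IsPeriodicAnalytic T h) (R : ℝ) :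
    UniformlyAnalyticOn (Function.uncurry h) (Icc (-R) R ×ˢ univ) := by
  have hcompact : IsCompact (Icc (-R) R ×ˢ Icc (0 : ι → ℝ) fun _ ↦ T) :=
    isCompact_Icc.prod isCompact_Icc
  refine (uniformlyAnalyticOn_of_isCompact hcompact fun p _ ↦ hh.analyticAt p).of_periodic
    fun q hq ↦ ?_
  obtain ⟨n, hn⟩ := exists_intCast_mul_add_mem_Icc hh.period_pos q.2
  refine ⟨(0, fun i ↦ n i * T), fun p ↦ ?_, ⟨by simpa using hq.1, hn⟩⟩
  simpa [Function.uncurry] using (hh.periodic p.1).periodic_intCast_mul n p.2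

theorem exists_abs_le (hh : IsPeriodicAnalytic T h) (R : ℝ) :
    ∃ C, ∀ x ∈ Icc (-R) R, ∀ ψ, |h x ψ| ≤ C := by
  obtain ⟨C, hC⟩ := (hh.uniformlyAnalyticOn R).exists_norm_le
  exact ⟨C, fun x hx ψ ↦ hC (x, ψ) ⟨hx, mem_univ ψ⟩⟩

theorem abs_sub_sub_le (hh : IsPeriodicAnalytic T h) {r κ c : ℝ} {ψ : ι → ℝ}
    (hκ : ∀ z ∈ Icc (-r) r, |spatialDeriv h z ψ - c| ≤ κ) {x y : ℝ} (hx : x ∈ Icc (-r) r)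
    (hy : y ∈ Icc (-r) r) : |h x ψ - h y ψ - c * (x - y)| ≤ κ * |x - y| := by
  have hderiv (z : ℝ) (_ : z ∈ Icc (-r) r) : HasDerivWithinAt (fun x ↦ h x ψ - c * x)
      (spatialDeriv h z ψ - c) (Icc (-r) r) z := by
    have hlinear : HasDerivAt (fun x : ℝ ↦ c * x) c z := hasDerivAt_const_mul c
    exact ((hh.hasDerivAt_spatialDeriv z ψ).sub hlinear).hasDerivWithinAt
  have hmvt := (convex_Icc (-r) r).norm_image_sub_le_of_norm_hasDerivWithin_le hderiv hκ hy hx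
  simp only [Real.norm_eq_abs] at hmvt
  convert hmvt using 2
  ring

theorem exists_abs_sub_sub_le (hh : IsPeriodicAnalytic T h) {κ : ℝ} (hκ : 0 < κ) :
    ∃ r > 0, ∀ x ∈ Icc (-r) r, ∀ y ∈ Icc (-r) r, ∀ ψ,
      |h x ψ - h y ψ - spatialDeriv h 0 ψ * (x - y)| ≤ κ * |x - y| := by
  obtain ⟨C, hC⟩ := hh.spatialDeriv.spatialDeriv.exists_abs_le 1
  have hC0 : 0 ≤ C := (abs_nonneg _).trans (hC 0 (by simp) 0)
  refine ⟨min 1 (κ / (C + 1)), by positivity, fun x hx y hy ψ ↦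
    hh.abs_sub_sub_le (fun z hz ↦ ?_) hx hy⟩
  have hz1 : z ∈ Icc (-1 : ℝ) 1 := abs_le.1 ((abs_le.2 hz).trans (min_le_left _ _))
  have hlip := hh.spatialDeriv.abs_sub_sub_le (r := 1) (κ := C) (c := 0) (ψ := ψ)
    (fun z hz ↦ by simpa using hC z hz ψ) hz1 (y := 0) (by simp)
  calc |spatialDeriv h z ψ - spatialDeriv h 0 ψ| ≤ C * |z| := by simpa using hlip
    _ ≤ (C + 1) * (κ / (C + 1)) := by
        gcongr
        · linarith
        · exact (abs_le.2 hz).trans (min_le_right _ _)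
    _ = κ := by field_simp

theorem hasDerivAt_setIntegral (hh : IsPeriodicAnalytic T h) (x : ℝ) :
    HasDerivAt (fun y ↦ ∫ ψ in Icc (0 : ι → ℝ) fun _ ↦ T, h y ψ)
      (∫ ψ in Icc (0 : ι → ℝ) fun _ ↦ T, spatialDeriv h x ψ) x := by
  have hint {h' : ℝ → (ι → ℝ) → ℝ} (hh' : IsPeriodicAnalytic T h') (y : ℝ) :
      IntegrableOn (h' y) (Icc (0 : ι → ℝ) fun _ ↦ T) :=
    (hh'.continuous.comp (Continuous.prodMk_right y)).continuousOn.integrableOn_compact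
      isCompact_Icc
  obtain ⟨C, hC⟩ := hh.spatialDeriv.exists_abs_le (|x| + 1)
  refine (hasDerivAt_integral_of_dominated_loc_of_deriv_le (bound := fun _ ↦ C)
    (ball_mem_nhds x one_pos) (.of_forall fun y ↦ (hint hh y).aestronglyMeasurable) (hint hh x)
    (hint hh.spatialDeriv x).aestronglyMeasurable (.of_forall fun ψ y hy ↦ hC y (abs_le.1 ?_) ψ)
    (integrableOn_const isCompact_Icc.measure_ne_top)
    (.of_forall fun ψ y _ ↦ hh.hasDerivAt_spatialDeriv y ψ)).2
  have hdist : |y - x| < 1 := hy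
  linarith [abs_sub_abs_le_abs_sub y x]

section Superposition

variable {X : Type*} [TopologicalSpace X]

/-- The superposition (Nemytskii) operator `u ↦ (s ↦ h (u s) (w s))` along a continuous family `w`
of angles. -/
def superposition (hh : IsPeriodicAnalytic T h) (w : C(X, ι → ℝ)) (u : X →ᵇ ℝ) : X →ᵇ ℝ :=
  .ofNormedAddCommGroup (fun s ↦ h (u s) (w s))
    (hh.continuous.comp (u.continuous.prodMk w.continuous)) (hh.exists_abs_le ‖u‖).choose fun s ↦
      (hh.exists_abs_le ‖u‖).choose_spec (u s) (abs_le.1 (u.norm_coe_le_norm s)) (w s)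

@[simp]
theorem superposition_apply (hh : IsPeriodicAnalytic T h) (w : C(X, ι → ℝ)) (u : X →ᵇ ℝ) (s : X) :
    hh.superposition w u s = h (u s) (w s) := rfl

theorem analyticAt_superposition (hh : IsPeriodicAnalytic T h) (w : C(X, ι → ℝ))
    (p : (ι → ℝ) × (X →ᵇ ℝ)) :
    AnalyticAt ℝ (fun q : (ι → ℝ) × (X →ᵇ ℝ) ↦ hh.superposition (.const X q.1 + w) q.2) p := by
  let base : C(X, ℝ × (ι → ℝ)) := p.2.toContinuousMap.prodMk (.const X p.1 + w)
  have hrange : range base ⊆ Icc (-‖p.2‖) ‖p.2‖ ×ˢ univ :=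
    range_subset_iff.2 fun s ↦ ⟨abs_le.1 (p.2.norm_coe_le_norm s), mem_univ _⟩
  have hbase : UniformlyAnalyticOn (Function.uncurry h) (range base) :=
    (hh.uniformlyAnalyticOn ‖p.2‖).mono hrange
  let N (v : X →ᵇ ℝ × (ι → ℝ)) : X →ᵇ ℝ := hh.superposition
    (.const X p.1 + w + (ContinuousMap.mk Prod.snd).comp v.toContinuousMap)
    (p.2 + (ContinuousLinearMap.fst ℝ ℝ (ι → ℝ)).compLeftContinuousBounded X v)
  have hN : AnalyticAt ℝ N 0 := hbase.analyticAt_superposition hh.analyticAt fun v s ↦ rfl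
  have hshift : AnalyticAt ℝ (fun q ↦ pairConst X ℝ (ι → ℝ) (q - p)) p :=
    ((pairConst X ℝ (ι → ℝ)).analyticAt _).comp (analyticAt_id.sub analyticAt_const)
  convert hN.comp_of_eq hshift (by rw [sub_self, map_zero]) using 1
  ext q s
  have hangle : p.1 + w s + (q.1 - p.1) = q.1 + w s := by abel
  simp [N, hangle]

end Superposition

end IsPeriodicAnalytic

end PeriodicAnalytic

section Response

open scoped NNReal

section GreenMul

variable {𝔸 : Type*} [NormedRing 𝔸] [NormedAlgebra ℝ 𝔸] [CompleteSpace 𝔸]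

/-- The operator `v ↦ greenOperator a ε (b * v)`. -/
def greenMul (a ε : ℝ) (b : ℝ →ᵇ 𝔸) : (ℝ →ᵇ 𝔸) →L[ℝ] (ℝ →ᵇ 𝔸) :=
  greenOperator a ε ∘L ContinuousLinearMap.mul ℝ (ℝ →ᵇ 𝔸) b

@[simp]
theorem greenMul_apply (a ε : ℝ) (b v : ℝ →ᵇ 𝔸) :
    greenMul a ε b v = greenOperator a ε (b * v) := rfl

theorem IsHyperbolic.norm_greenMul_le {a ε : ℝ} (hε : IsHyperbolic a ε) (b : ℝ →ᵇ 𝔸) :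
    ‖greenMul a ε b‖ ≤ ‖b‖ / |a| :=
  ContinuousLinearMap.opNorm_le_bound _ (by positivity) fun v ↦
    calc ‖greenMul a ε b v‖ ≤ ‖b * v‖ / |a| := hε.norm_greenOperator_le (b * v)
      _ ≤ ‖b‖ * ‖v‖ / |a| := by
          gcongr
          exact norm_mul_le b v
      _ = ‖b‖ / |a| * ‖v‖ := by ring

variable {V : Type*} [NormedAddCommGroup V] [NormedSpace ℝ V]

theorem IsAlmostCoboundary.eventually_norm_greenMul_mul_greenMul_le {ω : V} {G : V →ᵇ 𝔸} {a : ℝ}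
    (hG : IsAlmostCoboundary ω G) (ha : a ≠ 0) :
    ∀ᶠ ε in 𝓝[≠] 0, ∀ θ, ‖greenMul a ε (G.compContinuous (linearFlow ω θ)) *
      greenMul a ε (G.compContinuous (linearFlow ω θ))‖ ≤ 1 / 2 := by
  have hη : 0 < 1 / (2 * (‖G‖ + 1)) := by positivity
  filter_upwards [hG.eventually_norm_greenOperator_mul_le ha hη] with ε hε θ
  refine ContinuousLinearMap.opNorm_le_bound _ (by norm_num) fun v ↦ ?_
  set b := G.compContinuous (linearFlow ω θ)
  calc ‖greenOperator a ε (b * greenOperator a ε (b * v))‖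
      ≤ 1 / (2 * (‖G‖ + 1)) * ‖b * v‖ := hε θ (b * v)
    _ ≤ 1 / (2 * (‖G‖ + 1)) * ((‖G‖ + 1) * ‖v‖) := by
        gcongr
        refine (norm_mul_le b v).trans ?_
        gcongr
        linarith [BoundedContinuousFunction.norm_compContinuous_le G (linearFlow ω θ)]
    _ = 1 / 2 * ‖v‖ := by field_simp

end GreenMul

variable {ι : Type*} [Fintype ι] [DecidableEq ι]

/-- `Y` is the hull of a quasi-periodic solution `x(t) = Y (t • ω)` of
`ε x'' + x' + ε h(x, t • ω) = 0`: a real analytic function with period `T` in each coordinate. -/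
structure IsResponseSolution (T : ℝ) (ω : ι → ℝ) (h : ℝ → (ι → ℝ) → ℝ) (ε : ℝ)
    (Y : (ι → ℝ) → ℝ) : Prop where
  analyticAt : ∀ ψ, AnalyticAt ℝ Y ψ
  periodic : IsMultiperiodic T Y
  ode : ∀ t, ε * deriv (deriv fun s : ℝ ↦ Y (s • ω)) t + deriv (fun s : ℝ ↦ Y (s • ω)) t +
    ε * h (Y (t • ω)) (t • ω) = 0

/-- The average of `h x` over the torus of side `T`. -/
def torusMean (T : ℝ) (h : ℝ → (ι → ℝ) → ℝ) (x : ℝ) : ℝ :=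
  (T ^ Fintype.card ι)⁻¹ * ∫ ψ in Icc (0 : ι → ℝ) fun _ ↦ T, h x ψ

namespace IsPeriodicAnalytic

variable {T : ℝ} {ω : ι → ℝ} {h : ℝ → (ι → ℝ) → ℝ} {a ε : ℝ}

/-- The forcing `ψ ↦ h 0 ψ` felt at the origin. -/
def forcing (hh : IsPeriodicAnalytic T h) : (ι → ℝ) →ᵇ ℝ := hh.superposition (.id _) 0

/-- The deviation from `a` of the linearized coefficient `∂ₓh(0, ψ)`. -/
def deviation (hh : IsPeriodicAnalytic T h) (a : ℝ) : (ι → ℝ) →ᵇ ℝ :=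
  hh.spatialDeriv.forcing - .const _ a

@[simp]
theorem deviation_apply (hh : IsPeriodicAnalytic T h) (a : ℝ) (ψ : ι → ℝ) :
    hh.deviation a ψ = spatialDeriv h 0 ψ - a := rfl

theorem isAlmostCoboundary_forcing (hh : IsPeriodicAnalytic T h) (hω : IsNonresonant ω)
    (hzero : torusMean T h 0 = 0) : IsAlmostCoboundary ω hh.forcing := by
  have hT := hh.period_pos
  refine hω.isAlmostCoboundary hT (hh.periodic 0) ?_
  exact (mul_eq_zero.1 hzero).resolve_left (by positivity)

theorem isAlmostCoboundary_deviation (hh : IsPeriodicAnalytic T h) (hω : IsNonresonant ω) :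
    IsAlmostCoboundary ω (hh.deviation (deriv (torusMean T h) 0)) := by
  have hT := hh.period_pos
  refine hω.isAlmostCoboundary hT (fun i ψ ↦ ?_) ?_
  · simp only [deviation_apply, hh.spatialDeriv.periodic 0 i ψ]
  have hderiv : deriv (torusMean T h) 0 =
      (T ^ Fintype.card ι)⁻¹ * ∫ ψ in Icc (0 : ι → ℝ) fun _ ↦ T, spatialDeriv h 0 ψ :=
    ((hh.hasDerivAt_setIntegral 0).const_mul _).deriv
  have hint : IntegrableOn (spatialDeriv h 0) (Icc (0 : ι → ℝ) fun _ ↦ T) :=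
    hh.spatialDeriv.forcing.continuous.continuousOn.integrableOn_compact isCompact_Icc
  have hvol : volume.real (Icc (0 : ι → ℝ) fun _ ↦ T) = T ^ Fintype.card ι := by
    simp [measureReal_def, Real.volume_Icc_pi_toReal (a := (0 : ι → ℝ)) (b := fun _ ↦ T)
      fun _ ↦ hT.le]
  simp only [deviation_apply]
  rw [integral_sub hint (integrableOn_const isCompact_Icc.measure_ne_top), setIntegral_const, hvol,
    hderiv, smul_eq_mul, mul_inv_cancel_left₀ (by positivity), sub_self]

/-- The defect at `u` of the fixed-point form `u = G (a u - h(u, θ + t • ω))` of the equation, with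
`G` the Green operator of its linearization with constant coefficient `a`. -/
def residual (hh : IsPeriodicAnalytic T h) (ω : ι → ℝ) (a ε : ℝ) (p : (ι → ℝ) × (ℝ →ᵇ ℝ)) :
    ℝ →ᵇ ℝ :=
  p.2 + greenOperator a ε (hh.superposition (linearFlow ω p.1) p.2 - a • p.2)

theorem residual_zero (hh : IsPeriodicAnalytic T h) (θ : ι → ℝ) :
    hh.residual ω a ε (θ, 0) = greenOperator a ε (hh.forcing.compContinuous (linearFlow ω θ)) := by
  rw [residual, smul_zero, sub_zero, zero_add]
  rfl

theorem analyticAt_residual (hh : IsPeriodicAnalytic T h) (p : (ι → ℝ) × (ℝ →ᵇ ℝ)) :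
    AnalyticAt ℝ (hh.residual ω a ε) p := by
  have hflow (θ : ι → ℝ) : linearFlow ω θ = .const ℝ θ + linearFlow ω 0 := by
    ext
    simp
  have hresidual : hh.residual ω a ε = fun q ↦ q.2 +
      greenOperator a ε (hh.superposition (.const ℝ q.1 + linearFlow ω 0) q.2 - a • q.2) :=
    funext fun q ↦ by rw [residual, hflow]
  have hforce : AnalyticAt ℝ (fun q : (ι → ℝ) × (ℝ →ᵇ ℝ) ↦
      hh.superposition (.const ℝ q.1 + linearFlow ω 0) q.2 - a • q.2) p :=
    (hh.analyticAt_superposition (linearFlow ω 0) p).sub analyticAt_snd.fun_const_smul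
  rw [hresidual]
  exact analyticAt_snd.add (((greenOperator (E := ℝ) a ε).analyticAt _).fun_comp hforce)

theorem residual_add_single (hh : IsPeriodicAnalytic T h) (θ : ι → ℝ) (i : ι) (u : ℝ →ᵇ ℝ) :
    hh.residual ω a ε (θ + Pi.single i T, u) = hh.residual ω a ε (θ, u) := by
  have hsuperposition : hh.superposition (linearFlow ω (θ + Pi.single i T)) u =
      hh.superposition (linearFlow ω θ) u := by
    ext t
    simpa [add_right_comm] using hh.periodic (u t) i (θ + t • ω)
  simp only [residual, hsuperposition]

theorem residual_timeTranslate (hh : IsPeriodicAnalytic T h) (hε : IsHyperbolic a ε) (θ : ι → ℝ)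
    (s : ℝ) (u : ℝ →ᵇ ℝ) : hh.residual ω a ε (θ + s • ω, timeTranslate s u) =
      timeTranslate s (hh.residual ω a ε (θ, u)) := by
  have hforce : hh.superposition (linearFlow ω (θ + s • ω)) (timeTranslate s u) -
      a • timeTranslate s u =
        timeTranslate s (hh.superposition (linearFlow ω θ) u - a • u) := by
    ext t
    simp [add_smul, add_assoc, add_comm]
  rw [residual, hforce, hε.greenOperator_timeTranslate]
  rfl

theorem norm_residual_sub_sub_le (hh : IsPeriodicAnalytic T h) (hε : IsHyperbolic a ε) {κ r : ℝ}
    (hκ : ∀ x ∈ Icc (-r) r, ∀ y ∈ Icc (-r) r, ∀ ψ,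
      |h x ψ - h y ψ - spatialDeriv h 0 ψ * (x - y)| ≤ κ * |x - y|) (hκ0 : 0 ≤ κ) (θ : ι → ℝ)
    {u v : ℝ →ᵇ ℝ} (hu : u ∈ closedBall 0 r) (hv : v ∈ closedBall 0 r) :
    ‖hh.residual ω a ε (θ, u) - hh.residual ω a ε (θ, v) -
      (u - v + greenMul a ε ((hh.deviation a).compContinuous (linearFlow ω θ)) (u - v))‖ ≤
        κ / |a| * ‖u - v‖ := by
  have hmem {w : ℝ →ᵇ ℝ} (hw : w ∈ closedBall 0 r) (t : ℝ) : w t ∈ Icc (-r) r :=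
    abs_le.1 ((w.norm_coe_le_norm t).trans (mem_closedBall_zero_iff.1 hw))
  set b := (hh.deviation a).compContinuous (linearFlow ω θ) with hb
  set N := hh.superposition (linearFlow ω θ) with hN
  have hremainder : ‖N u - N v - (a • (u - v) + b * (u - v))‖ ≤ κ * ‖u - v‖ := by
    refine (BoundedContinuousFunction.norm_le (by positivity)).2 fun t ↦ ?_
    calc ‖(N u - N v - (a • (u - v) + b * (u - v))) t‖
        = |h (u t) (θ + t • ω) - h (v t) (θ + t • ω) -
            spatialDeriv h 0 (θ + t • ω) * (u t - v t)| := by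
          rw [Real.norm_eq_abs]
          congr 1
          simp only [hN, hb, BoundedContinuousFunction.sub_apply,
            BoundedContinuousFunction.add_apply, BoundedContinuousFunction.smul_apply,
            BoundedContinuousFunction.mul_apply, BoundedContinuousFunction.compContinuous_apply,
            superposition_apply, linearFlow_apply, deviation_apply, smul_eq_mul]
          ring
      _ ≤ κ * |u t - v t| := hκ _ (hmem hu t) _ (hmem hv t) _
      _ ≤ κ * ‖u - v‖ := by
          gcongr
          exact (u - v).norm_coe_le_norm t
  have hresidual (w : ℝ →ᵇ ℝ) :
      hh.residual ω a ε (θ, w) = w + greenOperator a ε (N w - a • w) := rfl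
  have hsplit : hh.residual ω a ε (θ, u) - hh.residual ω a ε (θ, v) -
      (u - v + greenMul a ε b (u - v)) =
        greenOperator a ε (N u - N v - (a • (u - v) + b * (u - v))) := by
    simp only [hresidual, greenMul_apply, map_sub, map_add, map_smul, mul_sub, smul_sub]
    abel
  rw [hsplit]
  refine (hε.norm_greenOperator_le _).trans ?_
  rw [div_mul_eq_mul_div]
  gcongr

theorem eventually_isNewtonBall (hh : IsPeriodicAnalytic T h) (ha : a ≠ 0)
    (hforcing : IsAlmostCoboundary ω hh.forcing)
    (hdeviation : IsAlmostCoboundary ω (hh.deviation a)) :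
    ∃ (K : ℝ≥0) (r : ℝ), ∀ᶠ ε in 𝓝[≠] 0, ∃ L : (ι → ℝ) → (ℝ →ᵇ ℝ) ≃L[ℝ] (ℝ →ᵇ ℝ),
      ∀ θ, IsNewtonBall (fun u ↦ hh.residual ω a ε (θ, u)) (L θ) K r := by
  set β := ‖hh.deviation a‖ / |a|
  let K : ℝ≥0 := ⟨2 * (1 + β), by positivity⟩
  have hK : (0 : ℝ) < K := show 0 < 2 * (1 + β) by positivity
  have hκ : 0 < |a| / (2 * K) := by positivity
  obtain ⟨r, hr, hκr⟩ := hh.exists_abs_sub_sub_le hκ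
  refine ⟨K, r, ?_⟩
  filter_upwards [eventually_isHyperbolic ha,
    hdeviation.eventually_norm_greenMul_mul_greenMul_le ha,
    hforcing.eventually_norm_greenOperator_le ha (η := r / (4 * K)) (by positivity)]
    with ε hε hcontract hsmall
  choose L hL using fun θ ↦ exists_continuousLinearEquiv_eq_one_add
    ((hcontract θ).trans_lt one_half_lt_one)
  have hLapply (θ : ι → ℝ) (v : ℝ →ᵇ ℝ) : L θ v =
      v + greenMul a ε ((hh.deviation a).compContinuous (linearFlow ω θ)) v :=
    DFunLike.congr_fun (hL θ) v
  refine ⟨L, fun θ ↦ ⟨hK, hr, fun v ↦ ?_, fun u hu v hv ↦ ?_, ?_⟩⟩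
  · rw [hLapply]
    have hβ : ‖greenMul a ε ((hh.deviation a).compContinuous (linearFlow ω θ))‖ ≤ β :=
      (hε.norm_greenMul_le _).trans <| div_le_div_of_nonneg_right
        (BoundedContinuousFunction.norm_compContinuous_le _ _) (abs_nonneg a)
    exact norm_le_mul_norm_add_of_norm_apply_apply_le hβ
      (ContinuousLinearMap.le_of_opNorm_le _ (hcontract θ) v)
  · have hres := hh.norm_residual_sub_sub_le hε hκr hκ.le θ hu hv (ω := ω)
    rw [← hLapply, div_div_cancel_left' (abs_ne_zero.2 ha)] at hres
    exact_mod_cast hres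
  · rw [hh.residual_zero, mul_comm, ← le_div_iff₀ (by positivity)]
    exact hsmall θ

theorem ode_of_residual_eq_zero (hh : IsPeriodicAnalytic T h) (hε : IsHyperbolic a ε)
    {θ : ι → ℝ} {u : ℝ →ᵇ ℝ} (hu : hh.residual ω a ε (θ, u) = 0) (t : ℝ) :
    ε * deriv (deriv u) t + deriv u t + ε * h (u t) (θ + t • ω) = 0 := by
  set f := a • u - hh.superposition (linearFlow ω θ) u with hf
  have hfixed : greenOperator a ε f = u := by
    rw [residual, ← neg_sub, map_neg, ← sub_eq_add_neg, sub_eq_zero] at hu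
    exact hu.symm
  have hvelocity : deriv u = greenVelocity a ε f :=
    funext fun s ↦ (hfixed ▸ hε.hasDerivAt_greenOperator f s).deriv
  have hε0 := hε.eps_ne_zero
  rw [hvelocity, (hε.hasDerivAt_greenVelocity f t).deriv, hfixed]
  simp only [hf, smul_eq_mul, BoundedContinuousFunction.sub_apply,
    BoundedContinuousFunction.smul_apply, superposition_apply, linearFlow_apply]
  field_simp
  ring

theorem exists_isResponseSolution_of_isNewtonBall (hh : IsPeriodicAnalytic T h)
    (hε : IsHyperbolic a ε) {K : ℝ≥0} {r : ℝ} {L : (ι → ℝ) → (ℝ →ᵇ ℝ) ≃L[ℝ] (ℝ →ᵇ ℝ)}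
    (hball : ∀ θ, IsNewtonBall (fun u ↦ hh.residual ω a ε (θ, u)) (L θ) K r) :
    ∃ Y, IsResponseSolution T ω h ε Y ∧
      ∀ ψ, |Y ψ| ≤ 2 * K * ‖greenOperator a ε (hh.forcing.compContinuous (linearFlow ω ψ))‖ := by
  obtain ⟨S, hS, hSanalytic⟩ := exists_analytic_zero_of_isNewtonBall hh.analyticAt_residual hball
  have hS_unique {θ : ι → ℝ} {u : ℝ →ᵇ ℝ} (hu : ‖u‖ ≤ r) (hzero : hh.residual ω a ε (θ, u) = 0) :
      S θ = u :=
    (hball θ).eq_of_apply_eq (hS θ).1 (mem_closedBall_zero_iff.2 hu) ((hS θ).2.trans hzero.symm)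
  have hSnorm (θ : ι → ℝ) : ‖S θ‖ ≤ r := mem_closedBall_zero_iff.1 (hS θ).1
  have hS_single (θ : ι → ℝ) (i : ι) : S (θ + Pi.single i T) = S θ :=
    hS_unique (hSnorm θ) ((hh.residual_add_single θ i _).trans (hS θ).2)
  have hS_flow (s : ℝ) : S (s • ω) = timeTranslate s (S 0) := by
    refine hS_unique ((BoundedContinuousFunction.norm_compContinuous_le _ _).trans (hSnorm 0)) ?_
    rw [← zero_add (s • ω), hh.residual_timeTranslate hε, (hS 0).2]
    rfl
  have horbit (s : ℝ) : S (s • ω) 0 = S 0 s := by rw [hS_flow, timeTranslate_apply, zero_add]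
  refine ⟨fun ψ ↦ S ψ 0, ⟨fun ψ ↦ ?_, fun i ψ ↦ ?_, fun t ↦ ?_⟩, fun ψ ↦ ?_⟩
  · exact ((BoundedContinuousFunction.evalCLM ℝ (0 : ℝ)).analyticAt _).comp (hSanalytic ψ)
  · simp only [hS_single]
  · simpa only [horbit, zero_add] using hh.ode_of_residual_eq_zero hε (hS 0).2 t
  · rw [← hh.residual_zero]
    exact ((S ψ).norm_coe_le_norm 0).trans ((hball ψ).norm_le (hS ψ).1 (hS ψ).2)

theorem exists_eventually_isResponseSolution (hh : IsPeriodicAnalytic T h) (hω : IsNonresonant ω)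
    (hzero : torusMean T h 0 = 0) (hsimple : deriv (torusMean T h) 0 ≠ 0) :
    ∃ X : ℝ → (ι → ℝ) → ℝ, (∀ᶠ ε in 𝓝[≠] 0, IsResponseSolution T ω h ε (X ε)) ∧
      TendstoUniformly X 0 (𝓝[≠] 0) := by
  set a := deriv (torusMean T h) 0
  have hforcing := hh.isAlmostCoboundary_forcing hω hzero
  obtain ⟨K, r, hball⟩ :=
    hh.eventually_isNewtonBall hsimple hforcing (hh.isAlmostCoboundary_deviation hω)
  have hsolution : ∀ᶠ ε in 𝓝[≠] 0, ∃ Y, IsResponseSolution T ω h ε Y ∧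
      ∀ ψ, |Y ψ| ≤ 2 * K * ‖greenOperator a ε (hh.forcing.compContinuous (linearFlow ω ψ))‖ := by
    filter_upwards [hball, eventually_isHyperbolic hsimple] with ε ⟨_, hε⟩ hhyp
    exact hh.exists_isResponseSolution_of_isNewtonBall hhyp hε
  obtain ⟨X, hX⟩ := hsolution.choice
  refine ⟨X, hX.mono fun _ h ↦ h.1, Metric.tendstoUniformly_iff.2 fun ρ hρ ↦ ?_⟩
  filter_upwards [hX, hforcing.eventually_norm_greenOperator_le hsimple
    (η := ρ / (2 * K + 1)) (by positivity)] with ε hε hsmall ψ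
  rw [Pi.zero_apply, dist_zero_left, Real.norm_eq_abs]
  calc |X ε ψ| ≤ 2 * K * (ρ / (2 * K + 1)) := (hε.2 ψ).trans (by gcongr; exact hsmall ψ)
    _ < (2 * K + 1) * (ρ / (2 * K + 1)) := by gcongr; linarith
    _ = ρ := by field_simp

end IsPeriodicAnalytic

end Response

end

/-- **Existence of response solutions for `ε x'' + x' + ε h(x, ωt) = 0` with arbitrary
frequency vectors.**  Let `ω ∈ ℝ^d` be nonresonant, `h : ℝ × ℝ^d → ℝ` real analytic and
`2π`-periodic in each of the last `d` coordinates, and let `c₀` be a simple zero of the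
average `h₀`.  Then for all `ε` with `0 < |ε| < ε₀` there is a real analytic periodic
`X ε` such that `x(t) = c₀ + X ε (t • ω)` solves the equation, with `sup |X ε| → 0`
as `ε → 0`. -/
theorem response_solution_exists_general
    (d : ℕ) (hd : 1 ≤ d) (ω : Fin d → ℝ)
    (hω : ∀ ν : Fin d → ℤ, ν ≠ 0 → (∑ i, ω i * (ν i : ℝ)) ≠ 0)
    (h : ℝ → (Fin d → ℝ) → ℝ)
    (hh : ∀ p : ℝ × (Fin d → ℝ), AnalyticAt ℝ (fun q : ℝ × (Fin d → ℝ) => h q.1 q.2) p)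
    (hhper : ∀ (x : ℝ) (ψ : Fin d → ℝ) (i : Fin d),
      h x (ψ + Pi.single i (2 * Real.pi)) = h x ψ)
    (h₀ : ℝ → ℝ)
    (hh₀ : ∀ x : ℝ, h₀ x = ((2 * Real.pi) ^ d)⁻¹ *
      ∫ ψ in Set.Icc (0 : Fin d → ℝ) (fun _ => 2 * Real.pi), h x ψ)
    (c₀ : ℝ) (hzero : h₀ c₀ = 0) (hsimple : deriv h₀ c₀ ≠ 0) :
    ∃ ε₀ > (0 : ℝ), ∃ X : ℝ → (Fin d → ℝ) → ℝ,
      (∀ ε : ℝ, 0 < |ε| → |ε| < ε₀ →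
        (∀ ψ : Fin d → ℝ, AnalyticAt ℝ (X ε) ψ) ∧
        (∀ (ψ : Fin d → ℝ) (i : Fin d), X ε (ψ + Pi.single i (2 * Real.pi)) = X ε ψ) ∧
        (∀ t : ℝ,
          ε * deriv (deriv (fun s : ℝ => c₀ + X ε (s • ω))) t
            + deriv (fun s : ℝ => c₀ + X ε (s • ω)) t
            + ε * h (c₀ + X ε (t • ω)) (t • ω)
            = 0)) ∧
      TendstoUniformly X 0 (nhdsWithin (0 : ℝ) {0}ᶜ) := by
  have hperiodic : IsPeriodicAnalytic (2 * Real.pi) h :=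
    ⟨Real.two_pi_pos, hh, fun x i ψ ↦ hhper x ψ i⟩
  have hmean : torusMean (2 * Real.pi) (fun x ↦ h (c₀ + x)) = fun x ↦ h₀ (c₀ + x) :=
    funext fun x ↦ by rw [torusMean, hh₀, Fintype.card_fin]
  obtain ⟨X, hX, hX0⟩ := (hperiodic.comp_const_add c₀).exists_eventually_isResponseSolution
    (ω := ω) hω (by simpa [hmean] using hzero)
    (by simpa [hmean, deriv_comp_const_add] using hsimple)
  obtain ⟨ε₀, hε₀, hball⟩ := Metric.mem_nhdsWithin_iff.1 hX
  refine ⟨ε₀, hε₀, X, fun ε hε hεε₀ ↦ ?_, hX0⟩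
  obtain ⟨hanalytic, hper, hode⟩ :=
    hball ⟨mem_ball_zero_iff.2 hεε₀, abs_pos.1 hε⟩
  exact ⟨hanalytic, fun ψ i ↦ hper i ψ, by simpa only [deriv_const_add'] using hode⟩
end

section
/- Let T be a finite rooted tree and let 𝔠(T) denote the set of chains of T, i.e. the connected components (under the parent relation) of the set V₁(T) of nodes with exactly one child. Then |𝔠(T)| ≤ |E(T)| + |V₂(T)|, where E(T) is the set of leaves and V₂(T) the set of nodes with at least two children. -/
/-- A finite rooted tree: a finite set `N` of nodes with a distinguished root and a
parent map fixing the root, such that iterating the parent map from any node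
eventually reaches the root. -/
structure FinRootedTree where
  N : Type
  [fintypeN : Fintype N]
  [decEqN : DecidableEq N]
  root : N
  parent : N → N
  parent_root : parent root = root
  reaches_root : ∀ v : N, ∃ n : ℕ, parent^[n] v = root

attribute [instance] FinRootedTree.fintypeN FinRootedTree.decEqN

namespace FinRootedTree

variable (T : FinRootedTree)

/-- The children of a node `v`: the non-root nodes whose parent is `v`. -/
def children (v : T.N) : Finset T.N :=
  Finset.univ.filter fun w => T.parent w = v ∧ w ≠ T.root

/-- The leaves `E(T)`: nodes with no children. -/
def leaves : Finset T.N :=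
  Finset.univ.filter fun v => T.children v = ∅

/-- The internal nodes `V(T)`: nodes with at least one child. -/
def internals : Finset T.N :=
  Finset.univ.filter fun v => T.children v ≠ ∅

/-- `V₁(T)`: nodes with exactly one child. -/
def V1 : Finset T.N :=
  Finset.univ.filter fun v => (T.children v).card = 1

/-- `V₂(T)`: nodes with at least two children. -/
def V2 : Finset T.N :=
  Finset.univ.filter fun v => 2 ≤ (T.children v).card

/-- The tops of the chains of `T`: each chain (maximal connected set of nodes of `V₁(T)`
under the parent relation) is uniquely represented by its highest node, namely the node
of `V₁(T)` which is either the root or whose parent is not in `V₁(T)`.  Hence the number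
of chains `|𝔠(T)|` equals the cardinality of this set. -/
def chainTops : Finset T.N :=
  T.V1.filter fun v => v = T.root ∨ T.parent v ∉ T.V1

end FinRootedTree

section ChildFamilies

open Finset Function

theorem card_biUnion_eq_card_of_card_eq_one {ι β : Type*} [DecidableEq β] {s : Finset ι}
    {t : ι → Finset β} (hdisj : (s : Set ι).PairwiseDisjoint t) (hcard : ∀ i ∈ s, #(t i) = 1) :
    #(s.biUnion t) = #s := by
  rw [card_biUnion hdisj, card_eq_sum_ones]
  exact sum_congr rfl hcard

variable {α : Type*} [Fintype α]

theorem card_filter_eq_zero_add_card_filter_eq_one_add_card_filter_two_le (f : α → ℕ) :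
    #{v | f v = 0} + #{v | f v = 1} + #{v | 2 ≤ f v} = Fintype.card α := by
  have filter_pos_eq_one : ({v | ¬f v = 0 ∧ f v = 1} : Finset α) = ({v | f v = 1} : Finset α) :=
    filter_congr fun v _ => by omega
  have filter_pos_ne_one : ({v | ¬f v = 0 ∧ ¬f v = 1} : Finset α) = ({v | 2 ≤ f v} : Finset α) :=
    filter_congr fun v _ => by omega
  rw [← card_univ, ← card_filter_add_card_filter_not (s := univ) (fun v => f v = 0),
    ← card_filter_add_card_filter_not (s := ({v | ¬f v = 0} : Finset α)) (fun v => f v = 1),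
    filter_filter, filter_filter, filter_pos_eq_one, filter_pos_ne_one, add_assoc]

variable [DecidableEq α] {children : α → Finset α}

/-- Sending each node with one child to that child is a bijection onto the only children;
compare complements. -/
theorem card_filter_not_only_child (hdisj : Pairwise (Disjoint on children)) :
    #{v | ∀ u, #(children u) = 1 → v ∉ children u} =
      #{v | children v = ∅} + #{v | 2 ≤ #(children v)} := by
  have not_only_child_eq_compl : ({v | ∀ u, #(children u) = 1 → v ∉ children u} : Finset α) =
      (({u | #(children u) = 1} : Finset α).biUnion children)ᶜ := by
    ext v
    simp
  have partition := card_filter_eq_zero_add_card_filter_eq_one_add_card_filter_two_le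
    fun v => #(children v)
  simp only [card_eq_zero] at partition
  have card_only_children : #(({u | #(children u) = 1} : Finset α).biUnion children) =
      #{u | #(children u) = 1} :=
    card_biUnion_eq_card_of_card_eq_one (hdisj.set_pairwise _) fun _ hu => (mem_filter.mp hu).2
  rw [not_only_child_eq_compl, card_compl, card_only_children]
  omega

theorem chains_le_leaves_add_V2_general (hdisj : Pairwise (Disjoint on children)) :
    #{v | #(children v) = 1 ∧ ∀ u, #(children u) = 1 → v ∉ children u} ≤
      #{v | children v = ∅} + #{v | 2 ≤ #(children v)} := by
  rw [← card_filter_not_only_child hdisj]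
  exact card_le_card (monotone_filter_right _ fun _ _ hv => hv.2)

end ChildFamilies

namespace FinRootedTree

open Finset Function

variable {T : FinRootedTree}

theorem mem_children {v w : T.N} : w ∈ T.children v ↔ T.parent w = v ∧ w ≠ T.root := by
  simp [children]

theorem mem_V1 {v : T.N} : v ∈ T.V1 ↔ #(T.children v) = 1 := by
  simp [V1]

theorem eq_root_or_parent_notMem_V1_iff {v : T.N} :
    v = T.root ∨ T.parent v ∉ T.V1 ↔ ∀ u, #(T.children u) = 1 → v ∉ T.children u := by
  simp only [mem_V1, mem_children]
  constructor
  · rintro (rfl | hparent) u hu ⟨rfl, hroot⟩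
    · exact hroot rfl
    · exact hparent hu
  · intro hnot
    by_contra! htop
    exact hnot (T.parent v) htop.2 ⟨rfl, htop.1⟩

variable (T)

theorem pairwise_disjoint_children : Pairwise (Disjoint on T.children) := by
  intro u v huv
  refine disjoint_left.mpr fun w hu hv => huv ?_
  exact (mem_children.mp hu).1.symm.trans (mem_children.mp hv).1

theorem chainTops_eq_filter : T.chainTops =
    ({v | #(T.children v) = 1 ∧ ∀ u, #(T.children u) = 1 → v ∉ T.children u} : Finset T.N) := by
  ext v
  simp only [chainTops, mem_filter, mem_univ, true_and, eq_root_or_parent_notMem_V1_iff]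
  rw [mem_V1]

end FinRootedTree

/-- In any finite rooted tree, the number of chains (connected components of `V₁(T)`
under the parent relation, counted via their top nodes) satisfies
`|𝔠(T)| ≤ |E(T)| + |V₂(T)|`. -/
theorem chains_le_leaves_add_V2 (T : FinRootedTree) :
    T.chainTops.card ≤ T.leaves.card + T.V2.card := by
  rw [T.chainTops_eq_filter]
  exact chains_le_leaves_add_V2_general T.pairwise_disjoint_children
end
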